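/- The only rational points on the smooth projective plane quartic curve C₆ : x⁴ + 2x³y + 3x²y² + 2xy³ + 18xyz² + 9y²z² − 9z⁴ = 0 are (0 : 1 : 0), (1 : −1 : 0), (0 : 1 : 1), and (0 : 1 : −1). Equivalently, every triple of coprime integers (x, y, z), not all zero, satisfying the equation equals ±(0,1,0), ±(1,−1,0), ±(0,1,1), or ±(0,1,−1). -/

import Mathlib

/-!
Let `L = ℚ(⁴√-7)`, which has class number one, and let `ω = (1 + √-7) / 2` and `τ = 1 - ω`, so that
`ωτ = 2`. The substitution `X = (ωx + ρy) / z` maps `C₆` over `L` to the genus one curve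
`s² = (X² - e₁) (X² - e₂)`, a covering of the elliptic curve `E : y² = x (x - e₁) (x - e₂)`. Since
`e₂ = e₁ ω⁴`, the curve `E` has complex multiplication by `ℤ[ω]`, and multiplication by `τ` is an
isogeny of degree two.

Descent along this isogeny shows that a point of `E(L)` in the kernel of reduction at `τ` has
`x - e₁` a square, hence is `τ` times another point, which is one step lower in the filtration of
the formal group. Following it down to the bottom of the filtration, one finds that the leading
coefficient of `X`, at a pole modulo `τ`, is `1` in the residue field `𝔽₄`.

A rational point of `C₆` with `z ≠ 0` even is such a pole, with the wrong leading coefficient. For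
`z` odd, translation by a point `±G` with `X = ρ`, preceded by multiplication by `τ` when `y` is
even, leads to a pole with the wrong leading coefficient unless `x = 0`.
-/

namespace CurveC6

/-! ### Divisibility -/

section General

theorem isPrincipalIdealRing_of_exists_lt {R : Type*} [CommRing R] (N : R → ℕ)
    (h : ∀ a b : R, b ≠ 0 → ∃ q, N (a - b * q) < N b) : IsPrincipalIdealRing R := by
  refine ⟨fun I ↦ ?_⟩
  rcases eq_or_ne I ⊥ with rfl | hI
  · exact bot_isPrincipal
  obtain ⟨b, ⟨hbI, hb0⟩, hmin⟩ :=
    exists_minimalFor_of_wellFoundedLT (fun b ↦ b ∈ I ∧ b ≠ 0) N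
      (Submodule.exists_mem_ne_zero_of_ne_bot hI)
  refine ⟨b, le_antisymm (fun a ha ↦ ?_) ((Ideal.span_singleton_le_iff_mem I).2 hbI)⟩
  obtain ⟨q, hq⟩ := h a b hb0
  have hmem : a - b * q ∈ I := I.sub_mem ha (I.mul_mem_right q hbI)
  have hzero : a - b * q = 0 := by
    by_contra hne
    exact (hmin ⟨hmem, hne⟩ hq.le).not_gt hq
  exact Ideal.mem_span_singleton.2 ⟨q, sub_eq_zero.1 hzero⟩

theorem exists_abs_two_mul_sub_mul_le (x : ℤ) {n : ℤ} (hn : 0 < n) :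
    ∃ k, |2 * (x - n * k)| ≤ n := by
  refine ⟨(2 * x + n) / (2 * n), abs_le.2 ?_⟩
  have hdiv := Int.mul_ediv_add_emod (2 * x + n) (2 * n)
  have hnonneg := Int.emod_nonneg (2 * x + n) (by lia : 2 * n ≠ 0)
  have hlt := Int.emod_lt_of_pos (2 * x + n) (by lia : 0 < 2 * n)
  constructor <;> linarith

theorem exists_eq_two_pow_mul_odd {n : ℤ} (hn : n ≠ 0) :
    ∃ (k : ℕ) (m : ℤ), n = 2 ^ k * m ∧ Odd m := by
  have hfin : FiniteMultiplicity 2 n := Int.finiteMultiplicity_iff.2 ⟨by decide, hn⟩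
  obtain ⟨m, hm, hdvd⟩ := hfin.exists_eq_pow_mul_and_not_dvd
  exact ⟨_, m, hm, by rwa [← Int.not_even_iff_odd, even_iff_two_dvd]⟩

theorem two_mul_zmod_eq_zero (k : ℕ) : (2 * k : ZMod (2 * k)) = 0 := by
  exact_mod_cast ZMod.natCast_self (2 * k)

theorem zmod_half_mul_of_even (k : ℕ) {n : ℤ} (hn : Even n) : (k * n : ZMod (2 * k)) = 0 := by
  obtain ⟨m, rfl⟩ := hn
  push_cast
  linear_combination m * two_mul_zmod_eq_zero k

theorem zmod_half_mul_of_odd (k : ℕ) {n : ℤ} (hn : Odd n) : (k * n : ZMod (2 * k)) = k := by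
  obtain ⟨m, rfl⟩ := hn
  push_cast
  linear_combination m * two_mul_zmod_eq_zero k

variable {R : Type*} [CommRing R] [IsDomain R]

theorem isSquare_of_sq_mul [IsIntegrallyClosed R] {a b : R} (ha : a ≠ 0)
    (h : IsSquare (a ^ 2 * b)) : IsSquare b := by
  obtain ⟨c, hc⟩ := h
  obtain ⟨d, rfl⟩ : a ∣ c :=
    (IsIntegrallyClosed.pow_dvd_pow_iff two_ne_zero).1 ⟨b, by rw [hc, sq]⟩
  exact ⟨d, mul_left_cancel₀ (pow_ne_zero 2 ha) (by linear_combination hc)⟩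

open Polynomial in
theorem dvd_of_mul_add_mul_eq_sq_mul [IsIntegrallyClosed R] {a c x z : R}
    (h : x * (x + a * c) = a ^ 2 * z) : a ∣ x := by
  rcases eq_or_ne a 0 with rfl | ha
  · simp_all
  have ha' : algebraMap R (FractionRing R) a ≠ 0 := by simpa using ha
  have hfrac := congrArg (algebraMap R (FractionRing R)) h
  simp only [map_mul, map_add, map_pow] at hfrac
  have hint : IsIntegral R (algebraMap R (FractionRing R) x / algebraMap R (FractionRing R) a) := by
    refine ⟨X ^ 2 + C c * X - C z, by monicity!, ?_⟩
    simp only [eval₂_sub, eval₂_add, eval₂_mul, eval₂_pow, eval₂_X, eval₂_C]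
    field_simp
    linear_combination hfrac
  obtain ⟨y, hy⟩ := IsIntegrallyClosed.isIntegral_iff.1 hint
  refine ⟨y, IsFractionRing.injective R (FractionRing R) ?_⟩
  rw [map_mul, hy, mul_div_cancel₀ _ ha']

theorem sq_dvd_or_sq_dvd_add [IsIntegrallyClosed R] {a c x z : R} (ha : Prime a)
    (h : x * (x + a * c) = a ^ 3 * z) : a ^ 2 ∣ x ∨ a ^ 2 ∣ x + a * c := by
  obtain ⟨y, rfl⟩ : a ∣ x :=
    dvd_of_mul_add_mul_eq_sq_mul (c := c) (z := a * z) (by linear_combination h)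
  have hdvd : a ∣ y * (y + c) :=
    ⟨z, mul_left_cancel₀ (pow_ne_zero 2 ha.ne_zero) (by linear_combination h)⟩
  rw [sq, ← mul_add]
  exact (ha.dvd_or_dvd hdvd).imp (mul_dvd_mul_left a) (mul_dvd_mul_left a)

theorem pow_dvd_or_pow_dvd_of_not_dvd_sub {p a b : R} {n : ℕ} (hp : Prime p) (hab : ¬ p ∣ b - a)
    (h : p ^ n ∣ a * b) : p ^ n ∣ a ∨ p ^ n ∣ b := by
  by_cases ha : p ∣ a
  · exact .inl (hp.pow_dvd_of_dvd_mul_right n (fun hb ↦ hab (dvd_sub hb ha)) h)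
  · exact .inr (hp.pow_dvd_of_dvd_mul_left n ha h)

theorem exists_fin_two_eq_pow_mul_of_dvd_mul {p m n : R} (hp : Prime p) (h : m ∣ p * n) :
    ∃ (i : Fin 2) (m' : R), m = p ^ (i : ℕ) * m' ∧ m' ∣ n := by
  rcases hp.left_dvd_or_dvd_right_of_dvd_mul h with ⟨m', rfl⟩ | hmn
  · exact ⟨1, m', by simp, (mul_dvd_mul_iff_left hp.ne_zero).1 h⟩
  · exact ⟨0, m, by simp, hmn⟩

variable [IsPrincipalIdealRing R]

theorem exists_eq_squarefree_mul_sq {x : R} (hx : x ≠ 0) :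
    ∃ m t : R, Squarefree m ∧ x = m * t ^ 2 := by
  induction x using (wellFounded_dvdNotUnit (α := R)).induction with
  | _ x ih =>
    by_cases hsq : Squarefree x
    · exact ⟨x, 1, hsq, by ring⟩
    obtain ⟨y, ⟨z, rfl⟩, hy⟩ : ∃ y, y * y ∣ x ∧ ¬ IsUnit y := by
      simpa [Squarefree] using hsq
    have hz : z ≠ 0 := right_ne_zero_of_mul hx
    have hyy : ¬ IsUnit (y * y) := fun hu ↦ hy (isUnit_of_mul_isUnit_left hu)
    obtain ⟨m, t, hm, rfl⟩ := ih z ⟨hz, y * y, hyy, mul_comm _ _⟩ hz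
    exact ⟨m, t * y, hm, by ring⟩

theorem exists_eq_mul_sq_of_squarefree {m e : R} (hm : Squarefree m) (h : IsSquare (m * e)) :
    ∃ r, e = m * r ^ 2 := by
  obtain ⟨s, hs⟩ := h
  obtain ⟨r, rfl⟩ : m ∣ s := (hm.dvd_pow_iff_dvd two_ne_zero).1 ⟨e, by rw [hs, sq]⟩
  exact ⟨r, mul_left_cancel₀ hm.ne_zero (by linear_combination hs)⟩

theorem isCoprime_of_squarefree {s b : R} (hs : Squarefree s)
    (h : ∀ p, Prime p → p ∣ s → p ∣ b → p * p ∣ s) : IsCoprime s b :=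
  isCoprime_of_prime_dvd (fun h0 ↦ hs.ne_zero h0.1) fun p hp hps hpb ↦
    hp.not_isUnit (hs p (h p hp hps hpb))

theorem exists_eq_mul_isCoprime {p q : R} (hp : p ≠ 0) :
    ∃ g p' q', p = g * p' ∧ q = g * q' ∧ IsCoprime p' q' := by
  obtain ⟨p', q', g, hrel, rfl, rfl⟩ := UniqueFactorizationMonoid.exists_reduced_factors p hp q
  exact ⟨g, p', q', rfl, rfl, hrel.isCoprime⟩

theorem map_eq_zero_iff_dvd_of_prime {S : Type*} [Semiring S] [Nontrivial S] (f : R →+* S) {g : R}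
    (hg : Prime g) (hf : f g = 0) (x : R) : f x = 0 ↔ g ∣ x := by
  refine ⟨fun hx ↦ ?_, fun hx ↦ zero_dvd_iff.1 (hf ▸ map_dvd f hx)⟩
  by_contra hdvd
  obtain ⟨a, b, hab⟩ := hg.irreducible.coprime_iff_not_dvd.2 hdvd
  simpa [hf, hx] using congrArg f hab

end General

/-! ### Quadratic algebras -/

instance {R : Type*} [Fintype R] {a b : R} : Fintype (QuadraticAlgebra R a b) :=
  Fintype.ofEquiv _ (QuadraticAlgebra.equivProd _ _).symm

open QuadraticAlgebra in
theorem irreducible_of_irreducible_norm {R : Type*} [CommRing R] {a b : R}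
    {x : QuadraticAlgebra R a b} (h : Irreducible x.norm) : Irreducible x where
  not_isUnit hx := h.not_isUnit (isUnit_iff_norm_isUnit.1 hx)
  isUnit_or_isUnit y z hyz := by
    rw [isUnit_iff_norm_isUnit, isUnit_iff_norm_isUnit]
    exact h.isUnit_or_isUnit (by rw [hyz, map_mul])

theorem isDomain_of_norm_eq_zero {R : Type*} [CommRing R] [IsDomain R] {a b : R}
    (h : ∀ x : QuadraticAlgebra R a b, x.norm = 0 → x = 0) :
    IsDomain (QuadraticAlgebra R a b) := by
  have : NoZeroDivisors (QuadraticAlgebra R a b) :=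
    ⟨fun {x y} hxy ↦ by
      have hn : x.norm * y.norm = 0 := by rw [← map_mul, hxy, QuadraticAlgebra.norm_zero]
      exact (mul_eq_zero.1 hn).imp (h x) (h y)⟩
  exact NoZeroDivisors.to_isDomain _

theorem exists_mem_im_dvd {R : Type*} [CommRing R] [IsPrincipalIdealRing R] {a b : R}
    (J : Ideal (QuadraticAlgebra R a b)) : ∃ η ∈ J, ∀ x ∈ J, η.im ∣ x.im := by
  let I : Ideal R := (J.restrictScalars R).map (QuadraticAlgebra.imₗ a b)
  obtain ⟨b, hb⟩ := IsPrincipalIdealRing.principal I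
  obtain ⟨η, hηJ, rfl⟩ : b ∈ I := hb ▸ Submodule.mem_span_singleton_self b
  refine ⟨η, hηJ, fun x hx ↦ ?_⟩
  rw [← Ideal.mem_span_singleton, ← Ideal.submodule_span_eq]
  exact hb ▸ ⟨x, hx, rfl⟩

section NormOne

variable {R : Type*} [CommRing R] [IsDomain R] [IsPrincipalIdealRing R] {a b : R}
  {u : QuadraticAlgebra R a b}

-- Hilbert 90: an element `u` of norm `1` satisfies `(1 + u)² = (2 + Tr u) u`.
theorem exists_squarefree_isSquare_mul_of_norm_eq_one [IsDomain (QuadraticAlgebra R a b)]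
    [IsIntegrallyClosed (QuadraticAlgebra R a b)] (hu : u.norm = 1) :
    ∃ s : R, Squarefree s ∧ IsSquare (u * algebraMap R (QuadraticAlgebra R a b) s) := by
  rcases eq_or_ne u (-1) with rfl | hne
  · exact ⟨-1, isUnit_one.neg.squarefree, 1, by simp⟩
  have hmul : (1 + u) ^ 2 = u * algebraMap R _ (2 + u.trace) := by
    have hsq := QuadraticAlgebra.sq_eq_trace_smul_sub_norm u
    rw [hu, map_one, Algebra.smul_def] at hsq
    rw [map_add, map_ofNat]
    linear_combination hsq
  have htr : 2 + u.trace ≠ 0 := fun h ↦ by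
    rw [h, map_zero, mul_zero, sq_eq_zero_iff] at hmul
    exact hne (by linear_combination hmul)
  obtain ⟨s, t, hs, hst⟩ := exists_eq_squarefree_mul_sq htr
  have ht : algebraMap R (QuadraticAlgebra R a b) t ≠ 0 :=
    (map_ne_zero_iff _ QuadraticAlgebra.algebraMap_injective).2
      (pow_ne_zero_iff two_ne_zero |>.1 (right_ne_zero_of_mul (hst ▸ htr)))
  refine ⟨s, hs, isSquare_of_sq_mul ht ⟨1 + u, ?_⟩⟩
  rw [← sq, hmul, hst, map_mul, map_pow]
  ring

theorem isCoprime_im_of_squarefree {s : R} (hs : Squarefree s) {w : QuadraticAlgebra R a b}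
    (hw : Associated s w.norm) : IsCoprime s w.im := by
  refine isCoprime_of_squarefree hs fun p hp hps hpim ↦ hw.dvd_iff_dvd_right.2 ?_
  rw [QuadraticAlgebra.norm_def]
  have hpre : p ∣ w.re := by
    refine hp.dvd_of_dvd_pow (n := 2) ?_
    have hsub : w.re ^ 2 = w.norm - w.im * (b * w.re - a * w.im) := by
      rw [QuadraticAlgebra.norm_def]; ring
    exact hsub ▸ dvd_sub (hps.trans hw.dvd) (hpim.mul_right _)
  obtain ⟨x, hx⟩ := hpre
  obtain ⟨y, hy⟩ := hpim
  exact ⟨x * x + b * x * y - a * y * y, by rw [hx, hy]; ring⟩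

theorem dvd_discrim_of_isSquare_mul (hu : u.norm = 1) {s : R} (hs : Squarefree s)
    (h : IsSquare (u * algebraMap R (QuadraticAlgebra R a b) s)) : s ∣ b ^ 2 + 4 * a := by
  obtain ⟨w, hw⟩ := h
  have hnorm : w.norm = s ∨ w.norm = -s := by
    refine sq_eq_sq_iff_eq_or_eq_neg.1 ?_
    rw [sq, ← map_mul, ← hw, map_mul, hu, one_mul, QuadraticAlgebra.norm_algebraMap]
  have hassoc : Associated s w.norm := by
    rcases hnorm with h | h
    · exact h ▸ Associated.refl s
    · exact h ▸ (Associated.refl s).neg_right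
  have htrace : w.im ^ 2 * (b ^ 2 + 4 * a) = s * u.trace - 2 * w.norm := by
    obtain ⟨hre, him⟩ := QuadraticAlgebra.ext_iff.1 hw
    simp only [QuadraticAlgebra.re_mul, QuadraticAlgebra.im_mul, QuadraticAlgebra.algebraMap_re,
      QuadraticAlgebra.algebraMap_im, mul_zero, add_zero, zero_add] at hre him
    rw [QuadraticAlgebra.norm_def, QuadraticAlgebra.trace_def]
    linear_combination -2 * hre - b * him
  refine ((isCoprime_im_of_squarefree hs hassoc).pow_right (n := 2)).dvd_of_dvd_mul_left ?_
  exact htrace ▸ dvd_sub (dvd_mul_right _ _) (hassoc.dvd.mul_left 2)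

end NormOne

/-! ### The ring of integers of `ℚ(√-7)` -/

/-- The ring of integers `ℤ[ω]`, `ω² = ω - 2`, of `ℚ(√-7)`. -/
abbrev OK : Type := QuadraticAlgebra ℤ (-2) 1

/-- The generator `ω = (1 + √-7) / 2` of `OK`. -/
def ωK : OK := ⟨0, 1⟩

theorem normK_eq (x : OK) : x.norm = x.re ^ 2 + x.re * x.im + 2 * x.im ^ 2 := by
  rw [QuadraticAlgebra.norm_def]; ring

theorem normK_nonneg (x : OK) : 0 ≤ x.norm := by
  rw [normK_eq]; nlinarith [sq_nonneg (2 * x.re + x.im), sq_nonneg x.im]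

theorem normK_eq_zero {x : OK} (h : x.norm = 0) : x = 0 := by
  rw [normK_eq] at h
  have him : x.im = 0 := by nlinarith [sq_nonneg (2 * x.re + x.im), sq_nonneg x.im]
  have hre : x.re = 0 := by simpa [him] using h
  exact QuadraticAlgebra.ext hre him

theorem normK_pos {x : OK} (h : x ≠ 0) : 0 < x.norm :=
  (normK_nonneg x).lt_of_ne' fun h0 ↦ h (normK_eq_zero h0)

instance : IsDomain OK := isDomain_of_norm_eq_zero fun _ ↦ normK_eq_zero

theorem exists_normK_sub_mul_le (a : OK) {m : OK} (hm : m ≠ 0) :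
    ∃ q, 16 * (a - m * q).norm ≤ 11 * m.norm := by
  have hpos := normK_pos hm
  obtain ⟨t, ht⟩ := exists_abs_two_mul_sub_mul_le (a * star m).im hpos
  set v := (a * star m).im - m.norm * t with hv
  obtain ⟨s, hs⟩ := exists_abs_two_mul_sub_mul_le (2 * (a * star m).re + v) (mul_pos two_pos hpos)
  set u := (a * star m).re - m.norm * s with hu
  have hmul : (a - m * ⟨s, t⟩) * star m = ⟨u, v⟩ := by
    have hstar := QuadraticAlgebra.algebraMap_norm_eq_mul_star m
    rw [sub_mul, mul_right_comm, ← hstar]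
    ext <;> simp [hu, hv]
  have hnorm : (a - m * ⟨s, t⟩).norm * m.norm = u ^ 2 + u * v + 2 * v ^ 2 := by
    rw [← QuadraticAlgebra.norm_star m, ← map_mul, hmul, normK_eq]
  have hv2 : (2 * v) ^ 2 ≤ m.norm ^ 2 := sq_le_sq' (abs_le.1 ht).1 (abs_le.1 ht).2
  have huv : (2 * u + v) ^ 2 ≤ m.norm ^ 2 := by
    obtain ⟨h1, h2⟩ := abs_le.1 hs
    refine sq_le_sq' ?_ ?_ <;> linarith
  refine ⟨⟨s, t⟩, le_of_mul_le_mul_right ?_ hpos⟩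
  linarith

instance : IsPrincipalIdealRing OK :=
  isPrincipalIdealRing_of_exists_lt (fun x ↦ x.norm.natAbs) fun a b hb ↦ by
    obtain ⟨q, hq⟩ := exists_normK_sub_mul_le a hb
    have := normK_pos hb
    have := normK_nonneg (a - b * q)
    exact ⟨q, by lia⟩

theorem of_normK_le_four {P : OK → Prop}
    (hP : ∀ r ∈ Finset.Icc (-2 : ℤ) 2, ∀ i ∈ Finset.Icc (-1 : ℤ) 1, P ⟨r, i⟩)
    {x : OK} (h : x.norm ≤ 4) : P x := by
  rw [normK_eq] at h
  refine hP x.re (Finset.mem_Icc.2 (abs_le.1 ?_)) x.im (Finset.mem_Icc.2 (abs_le.1 ?_))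
  · exact abs_le_of_sq_le_sq (by nlinarith [sq_nonneg (x.re + 4 * x.im)]) two_pos.le
  · refine Int.lt_add_one_iff.1 (abs_lt_of_sq_lt_sq ?_ two_pos.le)
    nlinarith [sq_nonneg (2 * x.re + x.im)]

theorem eq_one_or_eq_neg_one_of_normK_eq_one {u : OK} (hu : u.norm = 1) : u = 1 ∨ u = -1 :=
  of_normK_le_four (P := fun u ↦ u.norm = 1 → u = 1 ∨ u = -1) (by decide) (by lia) hu

theorem isUnitK_iff_norm_eq_one {u : OK} : IsUnit u ↔ u.norm = 1 := by
  have := normK_nonneg u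
  rw [QuadraticAlgebra.isUnit_iff_norm_isUnit, Int.isUnit_iff]
  lia

theorem eq_one_or_eq_neg_one_of_isUnit {u : OK} (hu : IsUnit u) : u = 1 ∨ u = -1 :=
  eq_one_or_eq_neg_one_of_normK_eq_one (isUnitK_iff_norm_eq_one.1 hu)

theorem irreducible_ωK : Irreducible ωK :=
  irreducible_of_irreducible_norm (Int.prime_two.irreducible : Irreducible (2 : ℤ))

theorem irreducible_two_mul_ωK_sub_one : Irreducible (2 * ωK - 1) :=
  irreducible_of_irreducible_norm
    ((Int.prime_iff_natAbs_prime.2 (by decide)).irreducible : Irreducible (7 : ℤ))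

theorem normK_ne_three (x : OK) : x.norm ≠ 3 := fun h ↦
  of_normK_le_four (P := fun x ↦ x.norm ≠ 3) (by decide) (by lia) h

theorem irreducible_three : Irreducible (3 : OK) where
  not_isUnit h := absurd (isUnitK_iff_norm_eq_one.1 h) (by decide)
  isUnit_or_isUnit x y h := by
    rw [isUnitK_iff_norm_eq_one, isUnitK_iff_norm_eq_one]
    have hmul : x.norm * y.norm = 9 := by rw [← map_mul, ← h]; rfl
    have hdvd : x.norm.natAbs ∣ 3 ^ 2 := Int.natAbs_dvd_natAbs.2 ⟨y.norm, hmul.symm⟩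
    have := normK_nonneg x
    have := normK_ne_three x
    obtain ⟨i, hi, hx⟩ := (Nat.dvd_prime_pow Nat.prime_three).1 hdvd
    interval_cases i
    · left; lia
    · lia
    · right
      have hx9 : x.norm = 9 := by lia
      rw [hx9] at hmul; lia

/-! ### The ring of integers of `ℚ(⁴√-7)` -/

/-- The ring of integers `OK[ρ]`, `ρ² = ωρ - ω`, of `ℚ(⁴√-7)`. -/
abbrev OL : Type := QuadraticAlgebra OK (-ωK) ωK

theorem normL_eq (x : OL) : x.norm = x.re ^ 2 + ωK * x.re * x.im + ωK * x.im ^ 2 := by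
  rw [QuadraticAlgebra.norm_def]; ring

theorem normL_eq_zero {x : OL} (h : x.norm = 0) : x = 0 := by
  rw [normL_eq] at h
  have him : x.im = 0 := by
    by_contra him
    have hωim : ωK * x.im ≠ 0 := mul_ne_zero irreducible_ωK.ne_zero him
    have hdisc : ωK ^ 2 * (2 * ωK - 1) = ωK ^ 2 - 4 * ωK := by decide
    have hsq : IsSquare ((ωK * x.im) ^ 2 * (2 * ωK - 1)) :=
      ⟨2 * x.re + ωK * x.im, by linear_combination x.im ^ 2 * hdisc - 4 * h⟩
    exact irreducible_two_mul_ωK_sub_one.not_isSquare (isSquare_of_sq_mul hωim hsq)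
  have hre : x.re = 0 := by simpa [him] using h
  exact QuadraticAlgebra.ext hre him

instance : IsDomain OL := isDomain_of_norm_eq_zero fun _ ↦ normL_eq_zero

/-- The generator `ρ` of `OL` over `OK`. -/
def ρ : OL := ⟨0, 1⟩

theorem eq_re_add_im_mul_ρ (x : OL) : x = algebraMap OK OL x.re + algebraMap OK OL x.im * ρ := by
  ext <;> simp [ρ]

/-- The relative norm of `c + ρ`. -/
def normShift (c : OK) : OK := c ^ 2 + ωK * c + ωK

theorem norm_algebraMap_add_ρ (c : OK) : (algebraMap OK OL c + ρ).norm = normShift c := by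
  simp [normL_eq, ρ, normShift]

theorem normK_sub_le {u v : OK} :
    10 * (u - v).norm ≤ 14 * u.norm + 35 * v.norm := by
  have hid : 10 * (u - v).norm + (2 * u + 5 * v).norm = 14 * u.norm + 35 * v.norm := by
    simp only [normK_eq, QuadraticAlgebra.re_sub, QuadraticAlgebra.im_sub, QuadraticAlgebra.re_add,
      QuadraticAlgebra.im_add, QuadraticAlgebra.re_mul, QuadraticAlgebra.im_mul,
      QuadraticAlgebra.re_ofNat, QuadraticAlgebra.im_ofNat]
    ring
  linarith [normK_nonneg (2 * u + 5 * v)]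

theorem normK_normShift_le (c : OK) :
    160 * (normShift c).norm ≤ 14 * (2 * c + ωK).norm ^ 2 + 980 := by
  have hid : 4 * normShift c = (2 * c + ωK) ^ 2 - ωK ^ 2 * (2 * ωK - 1) := by
    have hdisc : ωK ^ 2 * (2 * ωK - 1) = ωK ^ 2 - 4 * ωK := by decide
    rw [hdisc, normShift]; ring
  have hle := normK_sub_le (u := (2 * c + ωK) ^ 2) (v := ωK ^ 2 * (2 * ωK - 1))
  have hfour : (4 : OK).norm = 16 := by decide
  have hdisc : (ωK ^ 2 * (2 * ωK - 1)).norm = 28 := by decide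
  rw [← hid, map_mul, hfour, map_pow, hdisc] at hle
  linarith

theorem not_one_sub_ωK_dvd_normShift (c : OK) : ¬ 1 - ωK ∣ normShift c := by
  rintro ⟨y, hy⟩
  let f : OK →ₐ[ℤ] ZMod 2 := QuadraticAlgebra.lift ⟨1, by decide⟩
  have hω : f ωK = 1 := by decide
  have hzero : f c ^ 2 + f c + 1 = 0 := by
    simpa [normShift, hω] using congrArg f hy
  exact (by decide : ∀ a : ZMod 2, a ^ 2 + a + 1 ≠ 0) _ hzero

theorem ωK_dvd_of_dvd_normShift {c : OK} (h : ωK ∣ normShift c) : ωK ∣ c := by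
  refine irreducible_ωK.prime.dvd_of_dvd_pow (n := 2) ?_
  have hsub : c ^ 2 = normShift c - ωK * (c + 1) := by rw [normShift]; ring
  exact hsub ▸ dvd_sub h (dvd_mul_right _ _)

theorem not_ωK_sq_dvd_normShift (c : OK) : ¬ ωK ^ 2 ∣ normShift c := by
  intro h
  obtain ⟨e, rfl⟩ := ωK_dvd_of_dvd_normShift ((dvd_pow_self _ two_ne_zero).trans h)
  obtain ⟨y, hy⟩ := h
  refine irreducible_ωK.not_isUnit (IsUnit.of_mul_eq_one (y - e ^ 2 - e) ?_)
  refine mul_left_cancel₀ irreducible_ωK.ne_zero ?_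
  rw [normShift] at hy
  linear_combination -hy

theorem isUnit_or_associated_ωK_of_normK_le_four {m : OK} (hm : m ≠ 0) (hle : m.norm ≤ 4)
    (hτ : ¬ 1 - ωK ∣ m) (hω : ¬ ωK ^ 2 ∣ m) : IsUnit m ∨ Associated ωK m := by
  have hcases : m = 1 ∨ m = -1 ∨ m = ωK ∨ m = -ωK ∨
      ∃ y ∈ ({1, -1, ωK, -ωK, 1 - ωK, ωK - 1} : Finset OK), m = (1 - ωK) * y ∨ m = ωK ^ 2 * y :=
    of_normK_le_four (P := fun m ↦ m ≠ 0 → m = 1 ∨ m = -1 ∨ m = ωK ∨ m = -ωK ∨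
      ∃ y ∈ ({1, -1, ωK, -ωK, 1 - ωK, ωK - 1} : Finset OK), m = (1 - ωK) * y ∨ m = ωK ^ 2 * y)
      (by decide) hle hm
  rcases hcases with rfl | rfl | rfl | rfl | ⟨y, -, rfl | rfl⟩
  · exact .inl isUnit_one
  · exact .inl isUnit_one.neg
  · exact .inr (Associated.refl _)
  · exact .inr (Associated.refl _).neg_right
  · exact absurd (dvd_mul_right _ _) hτ
  · exact absurd (dvd_mul_right _ _) hω

/-- The norms of the nonzero elements of the ideal `J` attain their minimum at `d ∈ OK`. -/
structure AttainsMinNorm (J : Ideal OL) (d : OK) : Prop where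
  ne_zero : d ≠ 0
  mem : algebraMap OK OL d ∈ J
  le_norm : ∀ x ∈ J, x ≠ 0 → d.norm ^ 2 ≤ x.norm.norm

namespace AttainsMinNorm

variable {J : Ideal OL} {d : OK}

theorem dvd_of_algebraMap_mem (hJ : AttainsMinNorm J d) {k : OK} (hk : algebraMap OK OL k ∈ J) :
    d ∣ k := by
  obtain ⟨q, hq⟩ := exists_normK_sub_mul_le k hJ.ne_zero
  have hmem : algebraMap OK OL (k - d * q) ∈ J := by
    rw [map_sub, map_mul]
    exact J.sub_mem hk (J.mul_mem_right _ hJ.mem)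
  have hzero : k - d * q = 0 := by
    by_contra hne
    have hle := hJ.le_norm _ hmem
      ((map_ne_zero_iff _ QuadraticAlgebra.algebraMap_injective).2 hne)
    rw [QuadraticAlgebra.norm_algebraMap, map_pow] at hle
    have := abs_le_of_sq_le_sq' hle (normK_nonneg _)
    linarith [normK_pos hJ.ne_zero]
  exact ⟨q, sub_eq_zero.1 hzero⟩

-- `J` is the `OK`-lattice spanned by `d = b m` and `b (c + ρ)`, where `c` only matters modulo `m`.
theorem exists_basis (hJ : AttainsMinNorm J d) : ∃ b m c : OK, d = b * m ∧
    (∀ x ∈ J, b ∣ x.im) ∧ algebraMap OK OL b * (algebraMap OK OL c + ρ) ∈ J ∧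
    4 * (2 * c + ωK).norm ≤ 11 * m.norm := by
  obtain ⟨η, hηJ, him⟩ := exists_mem_im_dvd J
  obtain ⟨m, rfl⟩ : η.im ∣ d := by simpa [ρ] using him _ (J.mul_mem_right ρ hJ.mem)
  have hm0 : m ≠ 0 := right_ne_zero_of_mul hJ.ne_zero
  have hη := eq_re_add_im_mul_ρ η
  obtain ⟨c, hc⟩ : η.im ∣ η.re := by
    have hsub : algebraMap OK OL (η.re * m) =
        algebraMap OK OL m * η - algebraMap OK OL (η.im * m) * ρ := by
      rw [map_mul, map_mul]
      linear_combination -algebraMap OK OL m * hη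
    exact (mul_dvd_mul_iff_right hm0).1 (hJ.dvd_of_algebraMap_mem
      (hsub ▸ J.sub_mem (J.mul_mem_left _ hηJ) (J.mul_mem_right _ hJ.mem)))
  obtain ⟨q, hq⟩ := exists_normK_sub_mul_le (2 * c + ωK) (mul_ne_zero two_ne_zero hm0)
  refine ⟨η.im, m, c - m * q, rfl, him, ?_, ?_⟩
  · have hsub : algebraMap OK OL η.im * (algebraMap OK OL (c - m * q) + ρ) =
        η - algebraMap OK OL (η.im * m) * algebraMap OK OL q := by
      rw [hc, map_mul] at hη
      rw [map_sub, map_mul, map_mul]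
      linear_combination -hη
    exact hsub ▸ J.sub_mem hηJ (J.mul_mem_right _ hJ.mem)
  · have hfour : (2 : OK).norm = 4 := by decide
    have hshift : 2 * (c - m * q) + ωK = 2 * c + ωK - 2 * m * q := by ring
    rw [map_mul, hfour] at hq
    rw [hshift]
    linarith

section Basis

variable {b m c : OK}

theorem dvd_normShift (hJ : AttainsMinNorm J (b * m))
    (hmem : algebraMap OK OL b * (algebraMap OK OL c + ρ) ∈ J) : m ∣ normShift c := by
  have hprod : algebraMap OK OL (b * normShift c) =
      algebraMap OK OL b * (algebraMap OK OL c + ρ) * star (algebraMap OK OL c + ρ) := by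
    rw [map_mul, ← norm_algebraMap_add_ρ, QuadraticAlgebra.algebraMap_norm_eq_mul_star, mul_assoc]
  have hdvd := hJ.dvd_of_algebraMap_mem (hprod ▸ J.mul_mem_right _ hmem)
  exact (mul_dvd_mul_iff_left (left_ne_zero_of_mul hJ.ne_zero)).1 hdvd

theorem sq_normK_le (hJ : AttainsMinNorm J (b * m)) {η : OL} (hη : η ≠ 0)
    (hmem : algebraMap OK OL b * η ∈ J) : m.norm ^ 2 ≤ η.norm.norm := by
  have hb0 : b ≠ 0 := left_ne_zero_of_mul hJ.ne_zero
  have hle := hJ.le_norm _ hmem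
    (mul_ne_zero ((map_ne_zero_iff _ QuadraticAlgebra.algebraMap_injective).2 hb0) hη)
  rw [map_mul, map_mul, map_mul, QuadraticAlgebra.norm_algebraMap, map_pow, mul_pow] at hle
  exact le_of_mul_le_mul_left hle (pow_pos (normK_pos hb0) 2)

theorem not_associated_ωK (hJ : AttainsMinNorm J (b * m))
    (hmem : algebraMap OK OL b * (algebraMap OK OL c + ρ) ∈ J) : ¬ Associated ωK m := by
  rintro hassoc
  obtain ⟨e, he⟩ : m ∣ c :=
    hassoc.symm.dvd.trans (ωK_dvd_of_dvd_normShift (hassoc.dvd.trans (hJ.dvd_normShift hmem)))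
  have hρ : algebraMap OK OL b * ρ ∈ J := by
    have hsub : algebraMap OK OL b * ρ = algebraMap OK OL b * (algebraMap OK OL c + ρ) -
        algebraMap OK OL (b * m) * algebraMap OK OL e := by
      rw [he, map_mul, map_mul]; ring
    exact hsub ▸ J.sub_mem hmem (J.mul_mem_right _ hJ.mem)
  have hle := hJ.sq_normK_le (by decide) hρ
  obtain ⟨u, hu⟩ := hassoc
  have hnorm : m.norm = 2 := by
    rw [← hu, map_mul, isUnitK_iff_norm_eq_one.1 u.isUnit, mul_one]; rfl
  rw [hnorm] at hle
  exact absurd hle (by decide)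

theorem isUnit_of_basis (hJ : AttainsMinNorm J (b * m))
    (hmem : algebraMap OK OL b * (algebraMap OK OL c + ρ) ∈ J)
    (hc : 4 * (2 * c + ωK).norm ≤ 11 * m.norm) : IsUnit m := by
  have hdvd := hJ.dvd_normShift hmem
  have hne : algebraMap OK OL c + ρ ≠ 0 := fun h ↦ by
    simpa [ρ] using congrArg QuadraticAlgebra.im h
  have hle := hJ.sq_normK_le hne hmem
  rw [norm_algebraMap_add_ρ] at hle
  have hfour : m.norm ≤ 4 := by
    nlinarith [normK_normShift_le c, normK_nonneg (2 * c + ωK), normK_nonneg m]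
  refine (isUnit_or_associated_ωK_of_normK_le_four (right_ne_zero_of_mul hJ.ne_zero) hfour
    (fun h ↦ not_one_sub_ωK_dvd_normShift c (h.trans hdvd))
    fun h ↦ not_ωK_sq_dvd_normShift c (h.trans hdvd)).resolve_right (hJ.not_associated_ωK hmem)

end Basis

theorem algebraMap_dvd (hJ : AttainsMinNorm J d) {x : OL} (hx : x ∈ J) :
    algebraMap OK OL d ∣ x := by
  obtain ⟨b, m, c, rfl, him, hmem, hc⟩ := hJ.exists_basis
  obtain ⟨k, hk⟩ : b * m ∣ x.im :=
    ((hJ.isUnit_of_basis hmem hc).mul_right_dvd).2 (him x hx)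
  refine QuadraticAlgebra.algebraMap_dvd_iff.2 ⟨hJ.dvd_of_algebraMap_mem ?_, k, hk⟩
  have hsub : algebraMap OK OL x.re =
      x - algebraMap OK OL (b * m) * (algebraMap OK OL k * ρ) := by
    rw [← mul_assoc, ← map_mul, ← hk]
    exact eq_sub_of_add_eq (eq_re_add_im_mul_ρ x).symm
  exact hsub ▸ J.sub_mem hx (J.mul_mem_right _ hJ.mem)

end AttainsMinNorm

theorem normL_ne_zero {x : OL} (hx : x ≠ 0) : x.norm ≠ 0 := fun h ↦ hx (normL_eq_zero h)

instance : IsPrincipalIdealRing OL := by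
  refine ⟨fun I ↦ ?_⟩
  rcases eq_or_ne I ⊥ with rfl | hI
  · exact bot_isPrincipal
  obtain ⟨α, ⟨hαI, hα0⟩, hmin⟩ :=
    exists_minimalFor_of_wellFoundedLT (fun x ↦ x ∈ I ∧ x ≠ 0) (fun x : OL ↦ x.norm.norm.natAbs)
      (Submodule.exists_mem_ne_zero_of_ne_bot hI)
  have hstar : star α ≠ 0 := star_ne_zero.2 hα0
  have hJ : AttainsMinNorm (Ideal.span {star α} * I) α.norm := by
    refine ⟨normL_ne_zero hα0, Ideal.mem_span_singleton_mul.2 ⟨α, hαI, ?_⟩, fun x hx hx0 ↦ ?_⟩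
    · rw [QuadraticAlgebra.algebraMap_norm_eq_mul_star, mul_comm]
    · obtain ⟨y, hyI, rfl⟩ := Ideal.mem_span_singleton_mul.1 hx
      have hy0 : y ≠ 0 := right_ne_zero_of_mul hx0
      have hle : α.norm.norm ≤ y.norm.norm := by
        have := le_of_not_gt fun hlt ↦ (hmin ⟨hyI, hy0⟩ hlt.le).not_gt hlt
        have := normK_nonneg α.norm
        have := normK_nonneg y.norm
        lia
      rw [map_mul, map_mul, QuadraticAlgebra.norm_star, sq]
      exact mul_le_mul_of_nonneg_left hle (normK_nonneg _)
  refine ⟨α, le_antisymm (fun x hx ↦ ?_) ((Ideal.span_singleton_le_iff_mem I).2 hαI)⟩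
  have hdvd := hJ.algebraMap_dvd (Ideal.mem_span_singleton_mul.2 ⟨x, hx, rfl⟩)
  rw [QuadraticAlgebra.algebraMap_norm_eq_mul_star, mul_comm α] at hdvd
  exact Ideal.mem_span_singleton.2 ((mul_dvd_mul_iff_left hstar).1 hdvd)

/-- The image in `OL` of the generator of `OK`. -/
def ω : OL := algebraMap OK OL ωK

/-- The conjugate of `ω` over `ℚ`; it generates the prime of `OL` at which the descent is run. -/
def τ : OL := 1 - ω

/-- A square root of `√-7 = 2ω - 1`. -/
def μ : OL := τ * ρ - 1

/-- A fundamental unit of `OL`. -/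
def ε : OL := ρ - 1

/-- The inverse of `ε`. -/
def εInv : OL := ω - 1 - ρ

/-- One of the two primes of `OL` above `3`. -/
def π₁ : OL := 1 + ω * ρ

/-- The other prime of `OL` above `3`. -/
def π₂ : OL := -1 + ω - ω * ρ

theorem ω_add_τ : ω + τ = 1 := by decide

theorem ω_mul_τ : ω * τ = 2 := by decide

theorem μ_sq : μ ^ 2 = 2 * ω - 1 := by decide

theorem ε_mul_εInv : ε * εInv = 1 := by decide

theorem ω_eq_ρ_sq_mul : ω = ρ ^ 2 * εInv := by decide

theorem eq_add_mul_ω_add_mul_ρ (x : OL) :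
    x = x.re.re + x.re.im * ω + (x.im.re + x.im.im * ω) * ρ := by
  have hK (a : OK) : algebraMap OK OL a = a.re + a.im * ω := by ext <;> simp [ω, ωK]
  rw [← hK, ← hK, ← eq_re_add_im_mul_ρ]

/-- The ring homomorphism out of `OL` that sends `ω` to `w` and `ρ` to `r`. -/
def evalHom {R : Type*} [CommRing R] (w r : R) (hw : w ^ 2 = w - 2) (hr : r ^ 2 = w * r - w) :
    OL →+* R where
  toFun x := x.re.re + x.re.im * w + (x.im.re + x.im.im * w) * r
  map_one' := by
    have hone : (1 : OL) = ⟨⟨1, 0⟩, ⟨0, 0⟩⟩ := rfl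
    simp [hone]
  map_zero' := by simp
  map_add' x y := by simp; ring
  map_mul' x y := by
    simp [ωK]
    grind

/-- The residue ring of `OL` modulo the ideal generated by `n` and `ω - w`. -/
abbrev ResidueRing (n : ℕ) (w : ZMod n) : Type := QuadraticAlgebra (ZMod n) (-w) w

/-- The reduction map modulo the ideal generated by `n` and `ω - w`. -/
def residueMap (n : ℕ) (w : ZMod n) (hw : w ^ 2 = w - 2) : OL →+* ResidueRing n w :=
  evalHom (algebraMap _ _ w) ⟨0, 1⟩ (by rw [← map_pow, hw, map_sub]; rfl)
    (by ext <;> simp [sq])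

theorem residueMap_eq_zero_iff {n : ℕ} {w : ℤ} {hw : (w : ZMod n) ^ 2 = w - 2} {g : OL}
    (hgn : g ∣ n) (hgω : g ∣ ω - w) (hg : residueMap n w hw g = 0) (x : OL) :
    residueMap n w hw x = 0 ↔ g ∣ x := by
  refine ⟨fun hx ↦ ?_, fun hx ↦ zero_dvd_iff.1 (hg ▸ map_dvd _ hx)⟩
  have hcast : ∀ a : ℤ, (a : ZMod n) = 0 → g ∣ (a : OL) := fun a ha ↦ by
    obtain ⟨k, rfl⟩ := (ZMod.intCast_zmod_eq_zero_iff_dvd a n).1 ha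
    exact hgn.trans (by simp)
  obtain ⟨hre, him⟩ := QuadraticAlgebra.ext_iff.1 hx
  simp only [residueMap, evalHom, RingHom.coe_mk, MonoidHom.coe_mk, OneHom.coe_mk] at hre him
  have hre' := hcast (x.re.re + x.re.im * w) (by simpa using hre)
  have him' := hcast (x.im.re + x.im.im * w) (by simpa using him)
  have hdecomp : x = ((x.re.re + x.re.im * w : ℤ) : OL) + ((x.im.re + x.im.im * w : ℤ) : OL) * ρ +
      (ω - w) * (x.re.im + x.im.im * ρ) := by
    push_cast
    linear_combination eq_add_mul_ω_add_mul_ρ x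
  rw [hdecomp]
  exact dvd_add (dvd_add hre' (him'.mul_right ρ)) (hgω.mul_right _)

instance : Fact (∀ r : ZMod 2, r ^ 2 ≠ -1 + 1 * r) := ⟨by decide⟩

/-- The residue field of `τ`. -/
abbrev F4 : Type := ResidueRing 2 1

/-- Reduction modulo `τ`. -/
def modτ : OL →+* F4 := residueMap 2 1 (by decide)

theorem modτ_eq_zero_iff (x : OL) : modτ x = 0 ↔ τ ∣ x :=
  residueMap_eq_zero_iff (w := 1) ⟨ω, by decide⟩ ⟨-1, by decide⟩ (by decide) x

theorem prime_τ : Prime τ := by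
  rw [← Ideal.span_singleton_prime (by decide)]
  have hker : RingHom.ker modτ = Ideal.span {τ} := by
    ext x; rw [RingHom.mem_ker, modτ_eq_zero_iff, Ideal.mem_span_singleton]
  exact hker ▸ RingHom.ker_isPrime modτ

/-- Reduction modulo `τ²`. -/
def modτSq : OL →+* ResidueRing 4 3 := residueMap 4 3 (by decide)

/-- Reduction modulo `τ⁴`. -/
def modτPowFour : OL →+* ResidueRing 16 11 := residueMap 16 11 (by decide)

theorem modτPowFour_eq_zero_iff (x : OL) : modτPowFour x = 0 ↔ τ ^ 4 ∣ x :=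
  residueMap_eq_zero_iff (w := 11) ⟨ω ^ 4, by decide⟩ ⟨2 * ω - 1, by decide⟩ (by decide) x

theorem prime_ρ : Prime ρ :=
  (irreducible_of_irreducible_norm (x := ρ) irreducible_ωK).prime

theorem prime_μ : Prime μ := by
  have hnorm : μ.norm = -(2 * ωK - 1) := by decide
  exact (irreducible_of_irreducible_norm
    (hnorm ▸ irreducible_two_mul_ωK_sub_one.prime.neg.irreducible)).prime

theorem prime_π₁ : Prime π₁ := by
  have hnorm : π₁.norm = -3 := by decide
  exact (irreducible_of_irreducible_norm (hnorm ▸ irreducible_three.prime.neg.irreducible)).prime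

theorem prime_π₂ : Prime π₂ := by
  have hnorm : π₂.norm = -3 := by decide
  exact (irreducible_of_irreducible_norm (hnorm ▸ irreducible_three.prime.neg.irreducible)).prime

/-- Reduction modulo `ρ`. -/
def modρ : OL →+* ZMod 2 := evalHom 0 0 (by decide) (by decide)

/-- Reduction modulo `μ`. -/
def modμ : OL →+* ZMod 7 := evalHom 4 2 (by decide) (by decide)

instance : Fact (∀ r : ZMod 3, r ^ 2 ≠ 1 + 1 * r) := ⟨by decide⟩

/-- The residue field of each of the primes `π₁` and `π₂`. -/
abbrev F9 : Type := QuadraticAlgebra (ZMod 3) 1 1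

/-- Reduction modulo `π₁`. -/
def modπ₁ : OL →+* F9 := evalHom ⟨0, 1⟩ ⟨1, -1⟩ (by decide) (by decide)

/-- Reduction modulo `π₂`. -/
def modπ₂ : OL →+* F9 := evalHom ⟨0, 1⟩ ⟨-1, -1⟩ (by decide) (by decide)

theorem modρ_eq_zero_iff (x : OL) : modρ x = 0 ↔ ρ ∣ x :=
  map_eq_zero_iff_dvd_of_prime modρ prime_ρ (by decide) x

theorem modρ_eq_one_iff (x : OL) : modρ x = 1 ↔ ¬ ρ ∣ x := by
  rw [← modρ_eq_zero_iff]
  generalize modρ x = a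
  decide +revert

/-! ### Units of `OL` -/

theorem normL_ne_neg_one (u : OL) : u.norm ≠ -1 := by
  intro h
  rw [normL_eq] at h
  have hω : modμ (algebraMap OK OL ωK) = 4 := by decide
  have hmod := congrArg (fun t ↦ modμ (algebraMap OK OL t)) h
  simp only [map_add, map_mul, map_pow, map_neg, map_one, hω] at hmod
  exact (by decide : ∀ a b : ZMod 7, a ^ 2 + 4 * a * b + 4 * b ^ 2 ≠ -1) _ _ hmod

theorem normL_eq_one_of_isUnit {u : OL} (hu : IsUnit u) : u.norm = 1 :=
  (eq_one_or_eq_neg_one_of_isUnit (QuadraticAlgebra.isUnit_iff_norm_isUnit.1 hu)).resolve_right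
    (normL_ne_neg_one u)

theorem exists_eq_neg_one_pow_mul_of_dvd {s : OK} (h : s ∣ ωK * (2 * ωK - 1)) :
    ∃ i j k : Fin 2, s = (-1) ^ (k : ℕ) * ωK ^ (i : ℕ) * (2 * ωK - 1) ^ (j : ℕ) := by
  obtain ⟨i, s', rfl, hs'⟩ := exists_fin_two_eq_pow_mul_of_dvd_mul irreducible_ωK.prime h
  obtain ⟨j, v, rfl, hv⟩ :=
    exists_fin_two_eq_pow_mul_of_dvd_mul irreducible_two_mul_ωK_sub_one.prime
      ((mul_one (2 * ωK - 1)).symm ▸ hs')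
  rcases eq_one_or_eq_neg_one_of_isUnit (isUnit_of_dvd_one hv) with rfl | rfl
  · exact ⟨i, j, 0, by simp⟩
  · exact ⟨i, j, 1, by simp⟩

theorem exists_eq_neg_one_pow_mul_ε_pow_mul_sq_of_isUnit {u : OL} (hu : IsUnit u) :
    ∃ (k i : Fin 2) (v : OL), u = (-1) ^ (k : ℕ) * ε ^ (i : ℕ) * v ^ 2 := by
  have hnorm := normL_eq_one_of_isUnit hu
  obtain ⟨s, hs, hus⟩ := exists_squarefree_isSquare_mul_of_norm_eq_one hnorm
  have hdvd : s ∣ (ωK * (2 * ωK - 1)) ^ 2 :=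
    (dvd_discrim_of_isSquare_mul hnorm hs hus).trans ⟨2 * ωK - 1, by decide⟩
  obtain ⟨i, j, k, rfl⟩ :=
    exists_eq_neg_one_pow_mul_of_dvd ((hs.dvd_pow_iff_dvd two_ne_zero).1 hdvd)
  have hs' : algebraMap OK OL ((-1) ^ (k : ℕ) * ωK ^ (i : ℕ) * (2 * ωK - 1) ^ (j : ℕ)) =
      (ρ ^ (i : ℕ) * μ ^ (j : ℕ)) ^ 2 * ((-1) ^ (k : ℕ) * εInv ^ (i : ℕ)) := by
    have hω : algebraMap OK OL ωK = ρ ^ 2 * εInv := ω_eq_ρ_sq_mul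
    have hμ : algebraMap OK OL (2 * ωK - 1) = μ ^ 2 := μ_sq.symm
    rw [map_mul, map_mul, map_pow, map_pow, map_pow, hω, hμ, map_neg, map_one]
    ring
  rw [hs', mul_left_comm] at hus
  obtain ⟨v, hv⟩ := isSquare_of_sq_mul
    (mul_ne_zero (pow_ne_zero _ prime_ρ.ne_zero) (pow_ne_zero _ prime_μ.ne_zero)) hus
  refine ⟨k, i, v, ?_⟩
  have hε : (ε * εInv) ^ (i : ℕ) = 1 := by rw [ε_mul_εInv, one_pow]
  have hneg : ((-1 : OL) ^ (k : ℕ)) ^ 2 = 1 := by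
    rw [← pow_mul, mul_comm, pow_mul, neg_one_sq, one_pow]
  rw [mul_pow] at hε
  linear_combination (-1) ^ (k : ℕ) * ε ^ (i : ℕ) * hv - u * ((-1) ^ (k : ℕ)) ^ 2 * hε - u * hneg

/-! ### Local solubility of the coverings -/

section Local

theorem isSquare_of_sq_eq_mul_sq {S : Type*} [CommRing S] {a m r : S} (ha : IsUnit a)
    (h : a ^ 2 = m * r ^ 2) : IsSquare m := by
  obtain ⟨a', haa'⟩ := ha.exists_right_inv
  have hr : r * (m * r * a' ^ 2) = 1 := by
    linear_combination (a * a' + 1) * haa' - a' ^ 2 * h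
  generalize m * r * a' ^ 2 = r' at hr
  exact ⟨a * r', by linear_combination -m * (r * r' + 1) * hr - r' ^ 2 * h⟩

theorem isSquare_neg_of_mul_eq_zero {k : Type*} [Field k] {t m b B : k} (hb : b ≠ 0)
    (htB : t ≠ 0 ∨ B ≠ 0) (h : (t ^ 2 + m * B ^ 2) * (t ^ 2 + m * b ^ 2 * B ^ 2) = 0) :
    IsSquare (-m) := by
  have hB : B ≠ 0 := htB.elim (fun ht hB ↦ ht (by simpa [hB] using h)) id
  rcases mul_eq_zero.1 h with h | h
  · exact ⟨t / B, by field_simp; linear_combination -h⟩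
  · exact ⟨t / (b * B), by field_simp; linear_combination -h⟩

variable {R k : Type*} [CommRing R] [IsDomain R] [Field k] {f : R →+* k} {g : R}

/-- A necessary condition for the covering `m r² = (t² + m' B²)(t² + m' b² B²)` to be soluble at
a prime that divides `m m'` exactly once and has residue map `f`. -/
def SolubleAt {R k : Type*} [CommRing R] [CommRing k] (f : R →+* k) (m m' : R) : Prop :=
  f m ≠ 0 ∧ IsSquare (f m) ∨ f m = 0 ∧ IsSquare (-f m')

instance {R k : Type*} [CommRing R] [CommRing k] [Fintype k] [DecidableEq k] (f : R →+* k)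
    (m m' : R) : Decidable (SolubleAt f m m') :=
  inferInstanceAs (Decidable (_ ∨ _))

theorem isSquare_map_of_mul_eq (hf : ∀ x, f x = 0 ↔ g ∣ x) (hg : g ≠ 0) {t b B m n r : R}
    (hm : f m ≠ 0) (hn : f n ≠ 0) (hb : f b ≠ 0) (htB : f t ≠ 0 ∨ f B ≠ 0)
    (h : (t ^ 2 + g * n * B ^ 2) * (t ^ 2 + g * n * b ^ 2 * B ^ 2) = m * r ^ 2) :
    IsSquare (f m) := by
  have hfg : f g = 0 := (hf g).2 dvd_rfl
  have hfh := congrArg f h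
  simp only [map_mul, map_add, map_pow, hfg, zero_mul, add_zero] at hfh
  by_cases ht : f t = 0
  · have hr : f r = 0 := by simpa [ht, hm] using hfh.symm
    obtain ⟨t', rfl⟩ := (hf t).1 ht
    obtain ⟨r', rfl⟩ := (hf r).1 hr
    have hdiv : (g * t' ^ 2 + n * B ^ 2) * (g * t' ^ 2 + n * b ^ 2 * B ^ 2) = m * r' ^ 2 :=
      mul_left_cancel₀ (pow_ne_zero 2 hg) (by linear_combination h)
    have hfdiv := congrArg f hdiv
    simp only [map_mul, map_add, map_pow, hfg, zero_mul, zero_add] at hfdiv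
    have hB : f B ≠ 0 := htB.resolve_left (not_not.2 ht)
    have hunit : IsUnit (f n * f b * f B ^ 2) :=
      (mul_ne_zero (mul_ne_zero hn hb) (pow_ne_zero 2 hB)).isUnit
    exact isSquare_of_sq_eq_mul_sq (r := f r') hunit
      (by linear_combination hfdiv)
  · exact isSquare_of_sq_eq_mul_sq (r := f r) (pow_ne_zero 2 ht).isUnit
      (by linear_combination hfh)

theorem solubleAt_of_mul_eq (hf : ∀ x, f x = 0 ↔ g ∣ x) (hg : g ≠ 0) {t b B c m m' r : R}
    (hmm' : m * m' = g * c) (hc : f c ≠ 0) (hb : f b ≠ 0) (htB : f t ≠ 0 ∨ f B ≠ 0)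
    (h : (t ^ 2 + m' * B ^ 2) * (t ^ 2 + m' * b ^ 2 * B ^ 2) = m * r ^ 2) :
    SolubleAt f m m' := by
  by_cases hm : f m = 0
  · refine .inr ⟨hm, isSquare_neg_of_mul_eq_zero hb htB ?_⟩
    simpa [hm] using congrArg f h
  · have hm' : f m' = 0 := by
      have hfg : f g = 0 := (hf g).2 dvd_rfl
      simpa [hm, hfg] using congrArg f hmm'
    obtain ⟨n, rfl⟩ := (hf m').1 hm'
    have hn : f n ≠ 0 := fun hn ↦ hc <| by
      rw [← mul_left_cancel₀ hg ((mul_left_comm g m n).trans hmm'), map_mul, hn, mul_zero]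
    exact .inl ⟨hm, isSquare_map_of_mul_eq hf hg hm hn hb htB h⟩

/-- `p / q` is the abscissa of a point on the elliptic curve `y² = x (x - a) (x - b)`. -/
def IsAbscissa (a b p q : R) : Prop :=
  IsSquare (p * q * ((p - a * q) * (p - b * q)))

/-- A point on the covering of `y² = x (x + e) (x + e τ⁴)` attached to `m`, where `x = m t² / B²`;
it lies in the kernel of reduction at `τ`, because `τ ∣ B`. -/
structure IsCoveringPoint (e τ m m' t B r : R) : Prop where
  mul_eq : m * m' = e
  isCoprime : IsCoprime t B
  τ_dvd : τ ∣ B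
  eq : (t ^ 2 + m' * B ^ 2) * (t ^ 2 + m' * τ ^ 4 * B ^ 2) = m * r ^ 2

namespace IsCoveringPoint

variable {e τ m m' t B r : R}

theorem solubleAt (h : IsCoveringPoint e τ m m' t B r) (hf : ∀ x, f x = 0 ↔ g ∣ x) (hg : Prime g)
    {c : R} (hgc : e = g * c) (hc : f c ≠ 0) (hτ : f τ ≠ 0) : SolubleAt f m m' := by
  refine solubleAt_of_mul_eq (t := t) (b := τ ^ 2) (B := B) (r := r) hf hg.ne_zero
    (h.mul_eq.trans hgc) hc ?_ ?_ (by linear_combination h.eq)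
  · rw [map_pow]
    exact pow_ne_zero 2 hτ
  · rw [← not_and_or, hf, hf]
    exact fun ⟨ht, hB⟩ ↦ hg.not_isUnit (h.isCoprime.isUnit_of_dvd' ht hB)

theorem isSquare_map {R S : Type*} [CommRing R] [CommRing S] {e τ m m' t B r : R} {f : R →+* S}
    (h : IsCoveringPoint e τ m m' t B r) (hτ : f τ ^ 2 = 0) : IsSquare (f m) := by
  have hB : f B ^ 2 = 0 := by
    obtain ⟨B', rfl⟩ := h.τ_dvd
    rw [map_mul, mul_pow, hτ, zero_mul]
  have ht : IsUnit (f t) := by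
    obtain ⟨a, b, hab⟩ := h.isCoprime.pow_right (n := 2)
    refine IsUnit.of_mul_eq_one_right (f a) ?_
    simpa [hB] using congrArg f hab
  have heq := congrArg f h.eq
  simp only [map_mul, map_add, map_pow, hB, mul_zero, add_zero] at heq
  exact isSquare_of_sq_eq_mul_sq (r := f r) (ht.pow 2) (by linear_combination heq)

end IsCoveringPoint

namespace IsAbscissa

variable {a b p q : R}

theorem sub_mul {R : Type*} [CommRing R] {a b p q : R} (h : IsAbscissa a b p q) :
    IsAbscissa (-a) (b - a) (p - a * q) q := by
  rw [IsAbscissa] at h ⊢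
  convert h using 1
  ring

theorem of_mul [IsIntegrallyClosed R] {g : R} (hg : g ≠ 0) (h : IsAbscissa a b (g * p) (g * q)) :
    IsAbscissa a b p q := by
  rw [IsAbscissa] at h
  refine isSquare_of_sq_mul (pow_ne_zero 2 hg) ?_
  convert h using 1
  ring

variable {e τ m m' t B : R}

theorem isSquare_mul [IsIntegrallyClosed R]
    (h : IsAbscissa (-e) (-(e * τ ^ 4)) (m * t ^ 2) (B ^ 2)) (ht : t ≠ 0) (hB : B ≠ 0) :
    IsSquare (m * ((m * t ^ 2 + e * B ^ 2) * (m * t ^ 2 + e * τ ^ 4 * B ^ 2))) := by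
  rw [IsAbscissa] at h
  refine isSquare_of_sq_mul (mul_ne_zero ht hB) ?_
  convert h using 1
  ring

variable [IsPrincipalIdealRing R]

theorem exists_eq_unit_mul_sq (h : IsAbscissa a b p q) (hpq : IsCoprime p q) :
    ∃ (u : Rˣ) (B : R), q = u * B ^ 2 := by
  have hcop (c : R) : IsCoprime q (p - c * q) := by
    simpa [sub_eq_add_neg, mul_comm] using hpq.symm.add_mul_left_right (-c)
  obtain ⟨S, hS⟩ := h
  obtain ⟨B, u, hu⟩ := exists_associated_pow_of_mul_eq_pow' (k := 2) (c := S)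
    (hpq.symm.mul_right ((hcop a).mul_right (hcop b))) (by linear_combination hS)
  exact ⟨u, B, by rw [← hu, mul_comm]⟩

theorem exists_isCoprime (h : IsAbscissa a b p q) (hp : p ≠ 0) :
    ∃ D B, IsCoprime D B ∧ p * B ^ 2 = D * q ∧ IsAbscissa a b D (B ^ 2) := by
  obtain ⟨g, p, q, rfl, rfl, hpq⟩ := exists_eq_mul_isCoprime (q := q) hp
  have hred := h.of_mul (left_ne_zero_of_mul hp)
  obtain ⟨u, B, rfl⟩ := hred.exists_eq_unit_mul_sq hpq
  obtain ⟨D, rfl⟩ : (u : R) ∣ p := u.isUnit.dvd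
  refine ⟨D, B, ?_, by ring, hred.of_mul u.ne_zero⟩
  exact (IsCoprime.pow_right_iff two_pos).1 hpq.of_mul_left_right.of_mul_right_right

theorem dvd_sq (h : IsAbscissa (-e) (-(e * τ ^ 4)) (m * t ^ 2) (B ^ 2)) (hm : Squarefree m)
    (ht : t ≠ 0) (hB : B ≠ 0) (hmB : IsCoprime m B) (hτ : τ ∣ B) : m ∣ e ^ 2 := by
  obtain ⟨r, hr⟩ := exists_eq_mul_sq_of_squarefree hm (h.isSquare_mul ht hB)
  have hmτ : IsCoprime m τ := hmB.of_isCoprime_of_dvd_right hτ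
  refine ((hmτ.pow_right (n := 4)).mul_right (hmB.pow_right (n := 4))).dvd_of_dvd_mul_right
    ⟨r ^ 2 - t ^ 2 * (m * t ^ 2 + (e + e * τ ^ 4) * B ^ 2), ?_⟩
  linear_combination hr

theorem exists_isCoveringPoint (h : IsAbscissa (-e) (-(e * τ ^ 4)) (m * t ^ 2) (B ^ 2))
    (hm : Squarefree m) (ht : t ≠ 0) (hB : B ≠ 0) (hmm' : m * m' = e) (htB : IsCoprime t B)
    (hτ : τ ∣ B) : ∃ r, IsCoveringPoint e τ m m' t B r := by
  suffices hsq : IsSquare (m * ((t ^ 2 + m' * B ^ 2) * (t ^ 2 + m' * τ ^ 4 * B ^ 2))) by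
    obtain ⟨r, hr⟩ := exists_eq_mul_sq_of_squarefree hm hsq
    exact ⟨r, hmm', htB, hτ, hr⟩
  refine isSquare_of_sq_mul hm.ne_zero ?_
  convert h.isSquare_mul ht hB using 1
  rw [← hmm']
  ring

end IsAbscissa

end Local

/-- The first non-zero abscissa of a `2`-torsion point on the elliptic curve
`E : y² = x (x - e₁) (x - e₂)` on which the descent takes place. -/
def e₁ : OL := 3 * μ * ω

/-- The second non-zero abscissa of a `2`-torsion point on `E`. -/
def e₂ : OL := e₁ * ω ^ 4

theorem e₁_sub_e₂ : e₁ - e₂ = e₁ * τ ^ 4 := by decide +kernel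

theorem one_add_τ_pow_four : 1 + τ ^ 4 = 3 * ω := by decide

theorem one_sub_τ_pow_four : 1 - τ ^ 4 = ω ^ 4 := by decide

theorem ρ_sq_eq_ω_mul_ε : ρ ^ 2 = ω * ε := by decide

section AtRho

theorem ne_sq_add_ω_sq_mul {b : OL} (hb : ¬ ρ ∣ b) (r z : OL) :
    -3 * r ^ 2 ≠ b ^ 2 + ω ^ 2 * (ρ * z) := by
  intro h
  have hfactor : (r - b) * (r - b + ω * (τ * b)) = ω ^ 2 * (τ ^ 2 * r ^ 2 + ρ * z) := by
    linear_combination h + (b * (r - b) - r ^ 2 * (ω * τ + 2)) * ω_mul_τ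
  obtain ⟨d, hd⟩ := dvd_of_mul_add_mul_eq_sq_mul hfactor
  have hquot : d * (d + τ * b) = τ ^ 2 * r ^ 2 + ρ * z := by
    refine mul_left_cancel₀ (pow_ne_zero 2 (by decide : ω ≠ 0)) ?_
    rw [hd] at hfactor
    linear_combination hfactor
  have hmod₁ := congrArg modρ h
  have hmod₂ := congrArg modρ hquot
  have hτ : modρ τ = 1 := by decide
  have hρ : modρ ρ = 0 := by decide
  simp only [map_add, map_mul, map_pow, map_neg, map_ofNat, hτ, hρ, (modρ_eq_one_iff b).2 hb]
    at hmod₁ hmod₂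
  generalize modρ r = r', modρ d = d' at hmod₁ hmod₂
  generalize modρ z = z', modρ ω = ω' at hmod₁ hmod₂
  revert r' d' z' ω'
  decide

theorem exists_eq_neg_three_mul_sq {r y : OL} (h : ω ^ 2 * y = -3 * r ^ 2) :
    ∃ r', y = -3 * r' ^ 2 := by
  obtain ⟨r', rfl⟩ : ω ∣ r := (IsIntegrallyClosed.pow_dvd_pow_iff two_ne_zero).1
    ⟨y + τ ^ 2 * r ^ 2, by linear_combination -h - r ^ 2 * (ω * τ + 2) * ω_mul_τ⟩
  exact ⟨r', mul_left_cancel₀ (pow_ne_zero 2 (by decide : ω ≠ 0)) (by linear_combination h)⟩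

theorem mul_add_ω_pow_three_mul_ne {P : OL} (hP : ¬ ρ ^ 2 ∣ P) (y r : OL) :
    P * (P + ω ^ 3 * y) ≠ -3 * r ^ 2 := by
  intro h
  by_cases hρP : ρ ∣ P
  · obtain ⟨P', rfl⟩ := hρP
    have hP' : ¬ ρ ∣ P' := fun h ↦ hP (sq ρ ▸ mul_dvd_mul_left ρ h)
    obtain ⟨r', rfl⟩ : ρ ∣ r := by
      have hdvd : ρ ∣ -3 * r ^ 2 := h ▸ (dvd_mul_right ρ P').mul_right _
      refine prime_ρ.dvd_of_dvd_pow ((prime_ρ.dvd_or_dvd hdvd).resolve_left ?_)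
      rw [← modρ_eq_zero_iff]
      decide
    refine ne_sq_add_ω_sq_mul hP' r' (εInv * y * P') ?_
    refine mul_left_cancel₀ (pow_ne_zero 2 prime_ρ.ne_zero) ?_
    linear_combination -h + ρ * P' * ω ^ 2 * y * ω_eq_ρ_sq_mul
  · refine ne_sq_add_ω_sq_mul hρP r (ρ * εInv * y * P) ?_
    linear_combination -h + P * ω ^ 2 * y * ω_eq_ρ_sq_mul

theorem not_ρ_sq_dvd {B σ : OL} (hB : ¬ ρ ∣ B) :
    ¬ ρ ^ 2 ∣ ε * (ρ * εInv * B ^ 2 + ρ * τ * B * σ + ε * σ ^ 2) := by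
  intro h
  have hε : IsUnit ε := .of_mul_eq_one _ ε_mul_εInv
  have hεInv : IsUnit εInv := .of_mul_eq_one_right _ ε_mul_εInv
  rw [hε.dvd_mul_left] at h
  obtain ⟨σ', rfl⟩ : ρ ∣ σ := by
    refine prime_ρ.dvd_of_dvd_pow (n := 2) (hε.dvd_mul_left.1 ?_)
    refine (dvd_add_right ?_).1 ((dvd_pow_self ρ two_ne_zero).trans h)
    exact ⟨εInv * B ^ 2 + τ * B * σ, by ring⟩
  have hquot : ρ ∣ εInv * B ^ 2 + ρ * (τ * B * σ' + ε * σ' ^ 2) := by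
    refine (mul_dvd_mul_iff_left prime_ρ.ne_zero).1 ?_
    convert h using 1 <;> ring
  rw [dvd_add_left (dvd_mul_right _ _), hεInv.dvd_mul_left] at hquot
  exact hB (prime_ρ.dvd_of_dvd_pow hquot)

theorem ρ_dvd_sub {x y : OL} (hx : ¬ ρ ∣ x) (hy : ¬ ρ ∣ y) : ρ ∣ x - y := by
  rw [← modρ_eq_zero_iff, map_sub, (modρ_eq_one_iff x).2 hx, (modρ_eq_one_iff y).2 hy, sub_self]

theorem ε_mul_sq_sub_mul_ne {B : OL} (hB : ¬ ρ ∣ B) (t r : OL) :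
    (ε * t ^ 2 - μ * B ^ 2) * (ε * t ^ 2 - μ * τ ^ 4 * B ^ 2) ≠ -3 * r ^ 2 := by
  intro h
  by_cases ht : ρ ∣ t
  · obtain ⟨t', rfl⟩ := ht
    have hb : ¬ ρ ∣ μ * τ ^ 2 * B ^ 2 := by
      rw [← modρ_eq_one_iff] at hB ⊢
      simp only [map_mul, map_pow, hB]
      decide
    obtain ⟨z, hz⟩ : ρ ∣ ε ^ 4 * t' ^ 4 - 3 * μ * ε ^ 2 * t' ^ 2 * B ^ 2 := by
      rw [← modρ_eq_zero_iff]
      have hε : modρ ε = 1 := by decide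
      have hμ : modρ μ = 1 := by decide
      simp only [map_sub, map_mul, map_pow, hε, hμ, (modρ_eq_one_iff B).2 hB, map_ofNat]
      generalize modρ t' = a
      decide +revert
    refine ne_sq_add_ω_sq_mul hb r z ?_
    linear_combination -h + ω ^ 2 * hz + ε * t' ^ 2 * (ε * ρ ^ 2 * t' ^ 2
      + ε * ω * ε * t' ^ 2 - μ * B ^ 2 - μ * τ ^ 4 * B ^ 2) * ρ_sq_eq_ω_mul_ε
      - μ * ω * ε ^ 2 * t' ^ 2 * B ^ 2 * one_add_τ_pow_four
  · obtain ⟨σ, hσ⟩ := ρ_dvd_sub ht hB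
    obtain rfl : t = B + ρ * σ := by linear_combination hσ
    set P := ε * (ρ * εInv * B ^ 2 + ρ * τ * B * σ + ε * σ ^ 2)
    have hωP : ε * (B + ρ * σ) ^ 2 - μ * B ^ 2 = ω * P := by
      have hεμ : ε - μ = ω * ε * ρ * εInv := by decide
      linear_combination B ^ 2 * hεμ + ε * σ ^ 2 * ρ_sq_eq_ω_mul_ε - ε * ρ * B * σ * ω_mul_τ
    obtain ⟨r', hr'⟩ := exists_eq_neg_three_mul_sq (r := r) (y := P * (P + ω ^ 3 * (μ * B ^ 2)))
      (by linear_combination h - (ε * (B + ρ * σ) ^ 2 - μ * τ ^ 4 * B ^ 2 + ω * P) * hωP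
            - ω * P * μ * B ^ 2 * one_sub_τ_pow_four)
    exact mul_add_ω_pow_three_mul_ne (not_ρ_sq_dvd hB) _ _ hr'

theorem not_isCoveringPoint_neg_three (t B r : OL) :
    ¬ IsCoveringPoint e₁ τ (-3) (-(μ * ω)) t B r := by
  intro h
  by_cases ht : ρ ∣ t
  · have hB : ¬ ρ ∣ B := fun hB ↦ prime_ρ.not_isUnit (h.isCoprime.isUnit_of_dvd' ht hB)
    obtain ⟨t', rfl⟩ := ht
    obtain ⟨r', hr'⟩ := exists_eq_neg_three_mul_sq (r := r)
      (y := (ε * t' ^ 2 - μ * B ^ 2) * (ε * t' ^ 2 - μ * τ ^ 4 * B ^ 2))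
      (by linear_combination h.eq - t' ^ 2 * (ρ ^ 2 * t' ^ 2 + ω * ε * t' ^ 2
            - μ * ω * B ^ 2 - μ * ω * τ ^ 4 * B ^ 2) * ρ_sq_eq_ω_mul_ε)
    exact ε_mul_sq_sub_mul_ne hB t' r' hr'
  · obtain ⟨z, hz⟩ : ρ ∣ -3 * μ * t ^ 2 * B ^ 2 + μ ^ 2 * τ ^ 4 * B ^ 4 := by
      rw [← modρ_eq_zero_iff]
      have hτ : modρ τ = 1 := by decide
      have hμ : modρ μ = 1 := by decide
      simp only [map_add, map_neg, map_mul, map_pow, hτ, hμ, (modρ_eq_one_iff t).2 ht, map_ofNat]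
      generalize modρ B = a
      decide +revert
    refine ne_sq_add_ω_sq_mul (b := t ^ 2) (fun h ↦ ht (prime_ρ.dvd_of_dvd_pow h)) r z ?_
    linear_combination -h.eq + ω ^ 2 * hz - μ * ω * t ^ 2 * B ^ 2 * one_add_τ_pow_four

end AtRho

/-! ### Descent along multiplication by `τ` -/

/-- The squarefree divisors of `e₁²`, modulo squares of units. -/
def divisorClass (s a r e f g : Fin 2) : OL :=
  (-1) ^ (s : ℕ) * ε ^ (a : ℕ) * ρ ^ (r : ℕ) * μ ^ (e : ℕ) * π₁ ^ (f : ℕ) * π₂ ^ (g : ℕ)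

/-- The complementary divisor of `divisorClass s a r e f g` in `e₁ = -ρ² μ π₁ π₂ ε⁻¹`. -/
def complClass (s a r e f g : Fin 2) : OL :=
  -((-1) ^ (s : ℕ) * εInv ^ (a + 1 : ℕ) * ρ ^ (2 - r : ℕ) * μ ^ (1 - e : ℕ) * π₁ ^ (1 - f : ℕ) *
    π₂ ^ (1 - g : ℕ))

theorem divisorClass_mul_complClass :
    ∀ s a r e f g, divisorClass s a r e f g * complClass s a r e f g = e₁ := by
  decide +kernel

theorem exists_eq_divisorClass_mul_sq {m : OL} (hm : Squarefree m) (h : m ∣ e₁ ^ 2) :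
    ∃ s a r e f g v, m = divisorClass s a r e f g * v ^ 2 := by
  have hdvd : m ∣ (ρ * (μ * (π₁ * (π₂ * 1)))) ^ 4 :=
    h.trans ⟨(μ * π₁ * π₂) ^ 2 * ε ^ 2, by decide +kernel⟩
  rw [hm.dvd_pow_iff_dvd four_ne_zero] at hdvd
  obtain ⟨r, m₁, rfl, h₁⟩ := exists_fin_two_eq_pow_mul_of_dvd_mul prime_ρ hdvd
  obtain ⟨e, m₂, rfl, h₂⟩ := exists_fin_two_eq_pow_mul_of_dvd_mul prime_μ h₁
  obtain ⟨f, m₃, rfl, h₃⟩ := exists_fin_two_eq_pow_mul_of_dvd_mul prime_π₁ h₂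
  obtain ⟨g, u, rfl, hu⟩ := exists_fin_two_eq_pow_mul_of_dvd_mul prime_π₂ h₃
  obtain ⟨s, a, v, rfl⟩ := exists_eq_neg_one_pow_mul_ε_pow_mul_sq_of_isUnit (isUnit_of_dvd_one hu)
  exact ⟨s, a, r, e, f, g, v, by rw [divisorClass]; ring⟩

set_option synthInstance.maxSize 4000 in
theorem divisorClass_eq_one_or_eq_neg_three : ∀ s a r e f g,
    SolubleAt modμ (divisorClass s a r e f g) (complClass s a r e f g) →
    SolubleAt modπ₁ (divisorClass s a r e f g) (complClass s a r e f g) →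
    SolubleAt modπ₂ (divisorClass s a r e f g) (complClass s a r e f g) →
    IsSquare (modτSq (divisorClass s a r e f g)) →
    divisorClass s a r e f g = 1 ∨
      divisorClass s a r e f g = -3 ∧ complClass s a r e f g = -(μ * ω) := by
  decide +kernel

instance : Fact (Nat.Prime 7) := ⟨by norm_num⟩

theorem IsCoveringPoint.divisorClass_eq_one {s a r e f g : Fin 2} {t B y : OL}
    (h : IsCoveringPoint e₁ τ (divisorClass s a r e f g) (complClass s a r e f g) t B y) :
    divisorClass s a r e f g = 1 := by
  have hμ := h.solubleAt (map_eq_zero_iff_dvd_of_prime modμ prime_μ (by decide)) prime_μ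
    (c := 3 * ω) (by decide +kernel) (by decide) (by decide)
  have hπ₁ := h.solubleAt (map_eq_zero_iff_dvd_of_prime modπ₁ prime_π₁ (by decide)) prime_π₁
    (c := -(π₂ * μ * ω)) (by decide +kernel) (by decide) (by decide)
  have hπ₂ := h.solubleAt (map_eq_zero_iff_dvd_of_prime modπ₂ prime_π₂ (by decide)) prime_π₂
    (c := -(π₁ * μ * ω)) (by decide +kernel) (by decide) (by decide)
  have hτ := h.isSquare_map (f := modτSq) (by decide)
  refine (divisorClass_eq_one_or_eq_neg_three s a r e f g hμ hπ₁ hπ₂ hτ).resolve_right ?_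
  rintro ⟨hm, hm'⟩
  rw [hm, hm'] at h
  exact not_isCoveringPoint_neg_three t B y h

namespace IsAbscissa

theorem isSquare_of_isCoprime {D B : OL} (h : IsAbscissa (-e₁) (-(e₁ * τ ^ 4)) D (B ^ 2))
    (hD : D ≠ 0) (hB : B ≠ 0) (hDB : IsCoprime D B) (hτB : τ ∣ B) : IsSquare D := by
  obtain ⟨m, t, hm, rfl⟩ := exists_eq_squarefree_mul_sq hD
  have ht : t ≠ 0 := ne_zero_pow two_ne_zero (right_ne_zero_of_mul hD)
  obtain ⟨s, a, r, e, f, g, v, rfl⟩ :=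
    exists_eq_divisorClass_mul_sq hm (h.dvd_sq hm ht hB hDB.of_mul_left_left hτB)
  have hv : v ≠ 0 := ne_zero_pow two_ne_zero (right_ne_zero_of_mul hm.ne_zero)
  rw [mul_assoc, ← mul_pow] at h hDB ⊢
  obtain ⟨y, hy⟩ := h.exists_isCoveringPoint (hm.squarefree_of_dvd (dvd_mul_right _ _))
    (mul_ne_zero hv ht) hB (divisorClass_mul_complClass s a r e f g)
    (hDB.of_mul_left_right.of_isCoprime_of_dvd_left (dvd_pow_self _ two_ne_zero)) hτB
  rw [hy.divisorClass_eq_one, one_mul]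
  exact IsSquare.sq _

theorem isSquare_mul_of_τ_dvd {p q : OL} (h : IsAbscissa (-e₁) (-(e₁ * τ ^ 4)) p q)
    (hp : ¬ τ ∣ p) (hq : τ ∣ q) : IsSquare (p * q) := by
  have hp₀ : p ≠ 0 := fun hp₀ ↦ hp (hp₀ ▸ dvd_zero τ)
  rcases eq_or_ne q 0 with rfl | hq₀
  · simp
  obtain ⟨D, B, hDB, hfrac, hred⟩ := h.exists_isCoprime hp₀
  have hτB : τ ∣ B := prime_τ.dvd_of_dvd_pow
    ((prime_τ.dvd_or_dvd (hfrac ▸ hq.mul_left D)).resolve_left hp)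
  have hB : B ≠ 0 := by
    rintro rfl
    have hD : D = 0 := by simpa [hq₀] using hfrac.symm
    exact not_isCoprime_zero_zero (hD ▸ hDB)
  have hD : D ≠ 0 := by
    rintro rfl
    exact mul_ne_zero hp₀ (pow_ne_zero 2 hB) (by rw [hfrac, zero_mul])
  refine isSquare_of_sq_mul hB ?_
  obtain ⟨t, rfl⟩ := hred.isSquare_of_isCoprime hD hB hDB hτB
  exact ⟨t * q, by linear_combination q * hfrac⟩

theorem isSquare_sub_mul {p q : OL} (h : IsAbscissa e₁ e₂ p q) (hp : ¬ τ ∣ p) (hq : τ ∣ q) :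
    IsSquare ((p - e₁ * q) * q) := by
  have he : e₂ - e₁ = -(e₁ * τ ^ 4) := by rw [← e₁_sub_e₂, neg_sub]
  refine (he ▸ h.sub_mul).isSquare_mul_of_τ_dvd ?_ hq
  rwa [dvd_sub_left (hq.mul_left e₁)]

end IsAbscissa

theorem modτ_ω : modτ ω = 1 := by decide

theorem modτ_τ : modτ τ = 0 := by decide

theorem modτ_e₁ : modτ e₁ = 1 := by decide

theorem modτ_three : modτ 3 = 1 := by decide

theorem sq_eq_sq_of_mul_add_sq_eq {e t q : F4} (ht : t ≠ 0) (hq : q ≠ 0)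
    (h : e * (e + t ^ 2) = t ^ 2 * q ^ 2) : q ^ 2 = t ^ 2 := by
  have hv : e / t ^ 2 * (e / t ^ 2 + 1) = q ^ 2 / t ^ 2 := by
    field_simp
    linear_combination h
  have hF4 : ∀ v : F4, v * (v + 1) = 0 ∨ v * (v + 1) = 1 := by decide
  rcases hF4 (e / t ^ 2) with hzero | hone
  · exact absurd (hv ▸ hzero) (div_ne_zero (pow_ne_zero 2 hq) (pow_ne_zero 2 ht))
  · exact eq_of_div_eq_one (hv ▸ hone)

theorem modτ_ne_zero_iff {x : OL} : modτ x ≠ 0 ↔ ¬ τ ∣ x := (modτ_eq_zero_iff x).not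

theorem τ_dvd_sub_of_modτ_mul_eq {p q t : OL} (hq : ¬ τ ∣ q) (h : modτ q * modτ p = modτ t ^ 2)
    (hqt : modτ q ^ 2 = modτ t ^ 2) : τ ∣ p - q := by
  rw [← modτ_ne_zero_iff] at hq
  rw [← modτ_eq_zero_iff, map_sub, sub_eq_zero]
  exact mul_left_cancel₀ hq (by linear_combination h - hqt)

namespace IsAbscissa

variable {p q V : OL}

theorem exists_sq_eq (h : IsAbscissa e₁ e₂ p (q * (τ * V) ^ 2)) (hp : ¬ τ ∣ p) (hq : ¬ τ ∣ q)
    (hV : V ≠ 0) : ∃ t r, ¬ τ ∣ t ∧ modτ q * modτ p = modτ t ^ 2 ∧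
      (t ^ 2 + e₁ * (q * (τ * V)) ^ 2) * (t ^ 2 + e₁ * τ ^ 4 * (q * (τ * V)) ^ 2) = r ^ 2 := by
  have hτV : τ * V ≠ 0 := mul_ne_zero prime_τ.ne_zero hV
  obtain ⟨s, hs⟩ := h.isSquare_sub_mul hp ⟨q * τ * V ^ 2, by ring⟩
  obtain ⟨t, ht⟩ := (isSquare_of_sq_mul hτV ⟨s, by linear_combination hs⟩ :
    IsSquare (q * (p - e₁ * (q * (τ * V) ^ 2)))).exists_sq
  have htmod : modτ q * modτ p = modτ t ^ 2 := by
    rw [← map_pow, ← ht]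
    simp [modτ_τ]
  have hτt : ¬ τ ∣ t := by
    rw [← modτ_ne_zero_iff] at hp hq ⊢
    exact fun hzero ↦ mul_ne_zero hq hp (by simpa [hzero] using htmod)
  have ht₀ : t ≠ 0 := fun ht₀ ↦ hτt (ht₀ ▸ dvd_zero τ)
  obtain ⟨S, hS⟩ := h
  have h₁ : t ^ 2 + e₁ * (q * (τ * V)) ^ 2 = q * p := by linear_combination -ht
  have h₂ : t ^ 2 + e₁ * τ ^ 4 * (q * (τ * V)) ^ 2 = q * (p - e₂ * (q * (τ * V) ^ 2)) := by
    linear_combination -ht - (q * (τ * V)) ^ 2 * e₁_sub_e₂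
  have hsq : (τ * V * t) ^ 2 * ((t ^ 2 + e₁ * (q * (τ * V)) ^ 2) *
      (t ^ 2 + e₁ * τ ^ 4 * (q * (τ * V)) ^ 2)) = q * S * (q * S) := by
    rw [h₁, h₂, mul_pow, ← ht]
    linear_combination q ^ 2 * hS
  obtain ⟨r, hr⟩ := (isSquare_of_sq_mul (mul_ne_zero hτV ht₀) ⟨q * S, hsq⟩).exists_sq
  exact ⟨t, r, hτt, htmod, hr⟩

theorem exists_mul_add_eq (h : IsAbscissa e₁ e₂ p (q * (τ * V) ^ 2)) (hp : ¬ τ ∣ p)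
    (hq : ¬ τ ∣ q) (hV : V ≠ 0) : ∃ t e, ¬ τ ∣ t ∧ modτ q * modτ p = modτ t ^ 2 ∧
      e * (e + ω * t ^ 2) =
        V ^ 2 * (3 * ω * e₁ * t ^ 2 * q ^ 2 + e₁ ^ 2 * τ ^ 6 * V ^ 2 * q ^ 4) := by
  obtain ⟨t, r, hτt, ht, hr⟩ := h.exists_sq_eq hp hq hV
  have hfactor : (r - t ^ 2) * (r - t ^ 2 + τ * (ω * t ^ 2)) = τ ^ 2 *
      (V ^ 2 * (3 * ω * e₁ * t ^ 2 * q ^ 2 + e₁ ^ 2 * τ ^ 6 * V ^ 2 * q ^ 4)) := by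
    linear_combination -hr + (r - t ^ 2) * t ^ 2 * ω_mul_τ
      + e₁ * q ^ 2 * τ ^ 2 * V ^ 2 * t ^ 2 * one_add_τ_pow_four
  obtain ⟨e, he⟩ := dvd_of_mul_add_mul_eq_sq_mul hfactor
  refine ⟨t, e, hτt, ht, mul_left_cancel₀ (pow_ne_zero 2 prime_τ.ne_zero) ?_⟩
  rw [he] at hfactor
  linear_combination hfactor

theorem of_mul_add_eq {t e : OL}
    (h : e * (V ^ 2 * e + ω * t ^ 2) =
      3 * ω * e₁ * t ^ 2 * q ^ 2 + e₁ ^ 2 * τ ^ 6 * V ^ 2 * q ^ 4) :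
    IsAbscissa e₁ e₂ (ω * t ^ 2 + V ^ 2 * e + 3 * e₁ * q ^ 2 * V ^ 2) (ω * q ^ 2 * V ^ 2) := by
  set P := ω * t ^ 2 + V ^ 2 * e + 3 * e₁ * q ^ 2 * V ^ 2 with hP
  have hsum : ω + ω ^ 5 = 6 := by decide
  have hprod : (3 - ω) * (3 - ω ^ 5) = -τ ^ 6 := by decide
  have hmul : (P - e₁ * (ω * q ^ 2 * V ^ 2)) * (P - e₂ * (ω * q ^ 2 * V ^ 2)) = ω * t ^ 2 * P := by
    rw [hP, e₂]
    linear_combination V ^ 2 * h - (ω * t ^ 2 + V ^ 2 * e) * e₁ * q ^ 2 * V ^ 2 * hsum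
      + e₁ ^ 2 * q ^ 4 * V ^ 4 * hprod
  exact ⟨ω * q * V * t * P, by linear_combination P * (ω * q ^ 2 * V ^ 2) * hmul⟩

theorem exists_mul_mul_add_eq {n : ℕ} (h : IsAbscissa e₁ e₂ p (q * (τ * τ ^ n) ^ 2))
    (hp : ¬ τ ∣ p) (hq : ¬ τ ∣ q) :
    ∃ t e, ¬ τ ∣ t ∧ modτ q * modτ p = modτ t ^ 2 ∧
      e * ((τ ^ n) ^ 2 * e + ω * t ^ 2) =
        3 * ω * e₁ * t ^ 2 * q ^ 2 + e₁ ^ 2 * τ ^ 6 * (τ ^ n) ^ 2 * q ^ 4 := by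
  have hV : τ ^ n ≠ 0 := pow_ne_zero n prime_τ.ne_zero
  obtain ⟨t, e, hτt, ht, he⟩ := h.exists_mul_add_eq hp hq hV
  have hτω : ¬ τ ∣ e + ω * t ^ 2 - e := by
    rw [← modτ_ne_zero_iff] at hτt ⊢
    simpa [modτ_ω] using hτt
  have hdvd : τ ^ (n * 2) ∣ e ∨ τ ^ (n * 2) ∣ e + ω * t ^ 2 :=
    pow_dvd_or_pow_dvd_of_not_dvd_sub prime_τ hτω (he ▸ pow_mul τ n 2 ▸ dvd_mul_right _ _)
  rw [pow_mul] at hdvd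
  rcases hdvd with ⟨e', he'⟩ | ⟨e', he'⟩
  · refine ⟨t, e', hτt, ht, mul_left_cancel₀ (pow_ne_zero 2 hV) ?_⟩
    rw [← he, he']
    ring
  · refine ⟨t, -e', hτt, ht, mul_left_cancel₀ (pow_ne_zero 2 hV) ?_⟩
    rw [← he, eq_sub_of_add_eq he']
    ring

theorem τ_dvd_sub (n : ℕ) {p q : OL} (h : IsAbscissa e₁ e₂ p (q * (τ * τ ^ n) ^ 2))
    (hp : ¬ τ ∣ p) (hq : ¬ τ ∣ q) : τ ∣ p - q := by
  induction n generalizing p q with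
  | zero =>
    obtain ⟨t, e, hτt, ht, he⟩ := h.exists_mul_mul_add_eq hp hq
    refine τ_dvd_sub_of_modτ_mul_eq hq ht ?_
    rw [← modτ_ne_zero_iff] at hτt hq
    replace he := congrArg modτ he
    simp only [map_mul, map_add, map_pow, modτ_τ, modτ_ω, modτ_e₁, modτ_three] at he
    refine sq_eq_sq_of_mul_add_sq_eq (e := modτ e) hτt hq ?_
    linear_combination he
  | succ n ih =>
    obtain ⟨t, e, hτt, ht, he⟩ := h.exists_mul_mul_add_eq hp hq
    refine τ_dvd_sub_of_modτ_mul_eq hq ht ?_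
    have hP := of_mul_add_eq he
    rw [pow_succ' τ n] at hP
    generalize hPdef : ω * t ^ 2 + (τ * τ ^ n) ^ 2 * e + 3 * e₁ * q ^ 2 * (τ * τ ^ n) ^ 2 = P at hP
    have hmodP : modτ P = modτ t ^ 2 := by
      simp [← hPdef, modτ_ω, modτ_τ]
    have hmodQ : modτ (ω * q ^ 2) = modτ q ^ 2 := by simp [modτ_ω]
    rw [← modτ_ne_zero_iff] at hτt hq
    have hdvd := ih hP (by rw [← modτ_ne_zero_iff, hmodP]; exact pow_ne_zero 2 hτt)
      (by rw [← modτ_ne_zero_iff, hmodQ]; exact pow_ne_zero 2 hq)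
    rw [← modτ_eq_zero_iff, map_sub, hmodP, hmodQ, sub_eq_zero] at hdvd
    exact hdvd.symm

end IsAbscissa

/-! ### The genus one quartic -/

section Quartic

variable {R : Type*} [CommRing R] {a b p q : R}

/-- `p / q` is the abscissa of a point on the genus one curve `s² = (X² - a) (X² - b)`, which
covers `y² = x (x - a) (x - b)` by `x = X²`. -/
def OnQuartic (a b p q : R) : Prop :=
  IsSquare ((p ^ 2 - a * q ^ 2) * (p ^ 2 - b * q ^ 2))

namespace OnQuartic

theorem isAbscissa (h : OnQuartic a b p q) : IsAbscissa a b (p ^ 2) (q ^ 2) := by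
  obtain ⟨s, hs⟩ := h
  exact ⟨p * q * s, by linear_combination p ^ 2 * q ^ 2 * hs⟩

theorem of_mul [IsDomain R] [IsIntegrallyClosed R] {g : R} (hg : g ≠ 0)
    (h : OnQuartic a b (g * p) (g * q)) : OnQuartic a b p q := by
  obtain ⟨s, hs⟩ := h
  exact isSquare_of_sq_mul (pow_ne_zero 2 hg) ⟨s, by linear_combination hs⟩

theorem of_translation {r g s : R} (hg : g ^ 2 = (r ^ 2 - a) * (r ^ 2 - b))
    (hs : s ^ 2 = (p ^ 2 - a * q ^ 2) * (p ^ 2 - b * q ^ 2)) :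
    OnQuartic a b (r * s + g * p * q) (p ^ 2 - r ^ 2 * q ^ 2) :=
  ⟨(p ^ 2 + r ^ 2 * q ^ 2) * s * g + p * q * r * (2 * p ^ 2 * r ^ 2
    - (a + b) * (p ^ 2 + r ^ 2 * q ^ 2) + 2 * a * b * q ^ 2), by grind⟩

theorem of_isogeny {w t : R} (hadd : w + t = 1) (hmul : w * t = 2) (hab : b = a * w ^ 4)
    (h : OnQuartic a b p q) : OnQuartic a b (p ^ 2 + a * w ^ 2 * q ^ 2) (t * (p * q)) := by
  subst hab
  obtain ⟨s, hs⟩ := h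
  have hrel : 2 * w ^ 2 - t ^ 2 = -(1 + w ^ 4) := by grind
  have hfst : (p ^ 2 + a * w ^ 2 * q ^ 2) ^ 2 - a * (t * (p * q)) ^ 2 = s * s := by
    linear_combination hs + a * p ^ 2 * q ^ 2 * hrel
  have hsnd : (p ^ 2 + a * w ^ 2 * q ^ 2) ^ 2 - a * w ^ 4 * (t * (p * q)) ^ 2 =
      (p ^ 2 - a * w ^ 2 * q ^ 2) ^ 2 := by
    linear_combination -(a * w ^ 2 * p ^ 2 * q ^ 2 * (w * t + 2)) * hmul
  exact ⟨s * (p ^ 2 - a * w ^ 2 * q ^ 2), by rw [hfst, hsnd]; ring⟩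

section Translation

variable {r g w t l : R} {n : ℕ}

theorem sq_sub_sq_mul_sq (hwt : w * t = 2) (hp : p = r * q + t ^ (n + 2) * l) :
    p ^ 2 - r ^ 2 * q ^ 2 = t ^ (n + 3) * (l * (t ^ (n + 1) * l + w * r * q)) := by
  rw [hp]
  linear_combination -(t ^ (n + 2) * l * r * q) * hwt

variable [IsDomain R] [IsIntegrallyClosed R]

-- Replacing `s` by `-s` amounts to translating by `-G` instead of `G = (r, g)`.
theorem exists_sq_eq_sq_dvd (ht : Prime t) (hwt : w * t = 2)
    (hg : g ^ 2 = (r ^ 2 - a) * (r ^ 2 - b)) (hp : p = r * q + t ^ (n + 2) * l)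
    (h : OnQuartic a b p q) :
    ∃ s, s ^ 2 = (p ^ 2 - a * q ^ 2) * (p ^ 2 - b * q ^ 2) ∧ t ^ 2 ∣ r * s - g * p * q := by
  obtain ⟨s, hs⟩ := h.exists_sq
  have hprod : (r * s - g * p * q) * (r * s - g * p * q + t * (w * g * p * q)) =
      t ^ 3 * (t ^ n * l * (t ^ (n + 1) * l + w * r * q) * (r ^ 2 * p ^ 2 - a * b * q ^ 2)) := by
    linear_combination (r * s - g * p * q) * g * p * q * hwt - r ^ 2 * hs - p ^ 2 * q ^ 2 * hg
      + (r ^ 2 * p ^ 2 - a * b * q ^ 2) * sq_sub_sq_mul_sq hwt hp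
  rcases sq_dvd_or_sq_dvd_add ht hprod with hdvd | ⟨m, hm⟩
  · exact ⟨s, hs.symm, hdvd⟩
  · refine ⟨-s, by rw [neg_sq, hs], -m, ?_⟩
    linear_combination -hm + g * p * q * hwt

theorem exists_translation (ht : Prime t) (hwt : w * t = 2)
    (hg : g ^ 2 = (r ^ 2 - a) * (r ^ 2 - b)) (hp : p = r * q + t ^ (n + 2) * l)
    (h : OnQuartic a b p q) :
    ∃ m, OnQuartic a b (t * m + w * g * p * q)
      (t ^ (n + 2) * (l * (t ^ (n + 1) * l + w * r * q))) := by
  obtain ⟨s, hs, m, hm⟩ := h.exists_sq_eq_sq_dvd ht hwt hg hp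
  have hsum := of_translation hg hs
  have hfst : r * s + g * p * q = t * (t * m + w * g * p * q) := by
    linear_combination hm - g * p * q * hwt
  have hsnd : p ^ 2 - r ^ 2 * q ^ 2 =
      t * (t ^ (n + 2) * (l * (t ^ (n + 1) * l + w * r * q))) := by
    rw [sq_sub_sq_mul_sq hwt hp]; ring
  rw [hfst, hsnd] at hsum
  exact ⟨m, hsum.of_mul ht.ne_zero⟩

end Translation

end OnQuartic

end Quartic

theorem modτ_eq_of_onQuartic {p q : OL} {n : ℕ} (h : OnQuartic e₁ e₂ p (τ ^ (n + 1) * q))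
    (hp : ¬ τ ∣ p) (hq : ¬ τ ∣ q) : modτ p = modτ q := by
  have hsq : IsAbscissa e₁ e₂ (p ^ 2) (q ^ 2 * (τ * τ ^ n) ^ 2) := by
    obtain ⟨s, hs⟩ := h.isAbscissa
    exact ⟨s, by linear_combination hs⟩
  have hdvd := hsq.τ_dvd_sub n (mt prime_τ.dvd_of_dvd_pow hp) (mt prime_τ.dvd_of_dvd_pow hq)
  rw [← modτ_eq_zero_iff, map_sub, map_pow, map_pow, sub_eq_zero] at hdvd
  generalize modτ p = a at hdvd ⊢
  generalize modτ q = b at hdvd ⊢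
  decide +revert

/-- The ordinate of the point `G` with abscissa `ρ` on `s² = (X² - e₁) (X² - e₂)`. -/
def ordG : OL := ω * (1 + ρ) * (6 - ω - 3 * ρ + 2 * ω * ρ)

theorem ordG_sq : ordG ^ 2 = (ρ ^ 2 - e₁) * (ρ ^ 2 - e₂) := by decide

theorem modτ_ordG : modτ ordG = modτ ρ := by decide

theorem not_onQuartic_of_eq_ρ_mul_add {p q l : OL} {n : ℕ} (hp : p = ρ * q + τ ^ (n + 2) * l)
    (hq : ¬ τ ∣ q) (hl : ¬ τ ∣ l) (hlq : ¬ τ ∣ l - ρ * q) : ¬ OnQuartic e₁ e₂ p q := by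
  intro h
  obtain ⟨m, hm⟩ := h.exists_translation prime_τ ω_mul_τ ordG_sq hp
  have hmodp : modτ p = modτ ρ * modτ q := by
    rw [hp]; simp [modτ_τ]
  have hmodfst : modτ (τ * m + ω * ordG * p * q) = modτ ρ * modτ q * (modτ ρ * modτ q) := by
    simp only [map_add, map_mul, modτ_τ, modτ_ω, modτ_ordG, hmodp]
    ring
  have hmodsnd : modτ (l * (τ ^ (n + 1) * l + ω * ρ * q)) = modτ l * (modτ ρ * modτ q) := by
    simp [modτ_τ, modτ_ω]
  have hρ : modτ ρ ≠ 0 := by decide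
  rw [← modτ_ne_zero_iff] at hq hl hlq
  have hρq := mul_ne_zero hρ hq
  have hmod := modτ_eq_of_onQuartic hm
    (by rw [← modτ_ne_zero_iff, hmodfst]; exact mul_ne_zero hρq hρq)
    (by rw [← modτ_ne_zero_iff, hmodsnd]; exact mul_ne_zero hl hρq)
  rw [hmodfst, hmodsnd] at hmod
  rw [map_sub, map_mul] at hlq
  exact hlq (sub_eq_zero.2 (mul_right_cancel₀ hρq hmod).symm)

/-! ### Points on `C₆` -/

/-- The point `(x : y : z)` lies on the curve `C₆`. -/
def OnC6 {R : Type*} [CommRing R] (x y z : R) : Prop :=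
  x ^ 4 + 2 * x ^ 3 * y + 3 * x ^ 2 * y ^ 2 + 2 * x * y ^ 3
    + 18 * x * y * z ^ 2 + 9 * y ^ 2 * z ^ 2 - 9 * z ^ 4 = 0

instance {R : Type*} [CommRing R] [DecidableEq R] (x y z : R) : Decidable (OnC6 x y z) :=
  inferInstanceAs (Decidable (_ = _))

theorem modτ_two : modτ 2 = 0 := by decide

theorem modτ_intCast_of_even {n : ℤ} (hn : Even n) : modτ n = 0 := by
  obtain ⟨m, rfl⟩ := hn
  rw [Int.cast_add, map_add]
  generalize modτ m = a
  decide +revert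

theorem modτ_intCast_of_odd {n : ℤ} (hn : Odd n) : modτ n = 1 := by
  have hsub : modτ (n - 1 : ℤ) = 0 := modτ_intCast_of_even (hn.sub_odd odd_one)
  rwa [Int.cast_sub, map_sub, Int.cast_one, map_one, sub_eq_zero] at hsub

theorem two_pow_eq (n : ℕ) : (2 : OL) ^ n = τ ^ n * ω ^ n := by
  rw [← ω_mul_τ, mul_pow, mul_comm]

namespace OnC6

theorem intCast {x y z : ℤ} (h : OnC6 x y z) (R : Type*) [CommRing R] : OnC6 (x : R) y z := by
  have hR := congrArg (Int.cast : ℤ → R) h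
  push_cast at hR
  exact hR

theorem neg_right {R : Type*} [CommRing R] {x y z : R} (h : OnC6 x y z) : OnC6 x y (-z) := by
  rw [OnC6] at h ⊢
  linear_combination h

theorem onQuartic {x y z : OL} (h : OnC6 x y z) : OnQuartic e₁ e₂ (ω * x + ρ * y) z := by
  obtain ⟨a, ha⟩ : ∃ a, a = -μ * ω := ⟨_, rfl⟩
  obtain ⟨b, hb⟩ : ∃ b, b = -2 * τ - 2 * μ * ρ := ⟨_, rfl⟩
  obtain ⟨c, hc⟩ : ∃ c, c = -τ - μ * ε := ⟨_, rfl⟩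
  have hx₄ : a ^ 2 = ω ^ 4 - 4 := by rw [ha]; decide
  have hx₃y : 2 * a * b = 4 * ω ^ 3 * ρ - 8 := by rw [ha, hb]; decide
  have hx₂y₂ : b ^ 2 + 2 * a * c = 6 * ω ^ 2 * ρ ^ 2 - 12 := by rw [ha, hb, hc]; decide
  have hxy₃ : 2 * b * c = 4 * ω * ρ ^ 3 - 8 := by rw [hb, hc]; decide
  have hy₄ : c ^ 2 = ρ ^ 4 := by rw [hc]; decide
  have hx₂z₂ : 18 * ω * a = -(e₁ + e₂) * ω ^ 2 := by rw [ha]; decide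
  have hxyz₂ : 18 * ω * b = -(e₁ + e₂) * (2 * ω * ρ) - 72 := by rw [hb]; decide
  have hy₂z₂ : 18 * ω * c = -(e₁ + e₂) * ρ ^ 2 - 36 := by rw [hc]; decide
  have hz₄ : (9 * ω) ^ 2 = e₁ * e₂ + 36 := by decide
  refine ⟨a * x ^ 2 + b * x * y + c * y ^ 2 + 9 * ω * z ^ 2, ?_⟩
  rw [OnC6] at h
  linear_combination 4 * h - x ^ 4 * hx₄ - x ^ 3 * y * hx₃y - x ^ 2 * y ^ 2 * hx₂y₂
    - x * y ^ 3 * hxy₃ - y ^ 4 * hy₄ - x ^ 2 * z ^ 2 * hx₂z₂ - x * y * z ^ 2 * hxyz₂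
    - y ^ 2 * z ^ 2 * hy₂z₂ - z ^ 4 * hz₄

variable {x y z : ℤ}

theorem even_iff_even (h : OnC6 x y z) (hy : Even y) : Even x ↔ Even z := by
  have h₂ := h.intCast (ZMod 2)
  rw [← ZMod.intCast_eq_zero_iff_even] at hy
  rw [← ZMod.intCast_eq_zero_iff_even, ← ZMod.intCast_eq_zero_iff_even]
  rw [hy] at h₂
  generalize (x : ZMod 2) = a at *
  generalize (z : ZMod 2) = c at *
  clear h hy
  decide +revert

theorem eq_zero_of_even (h : OnC6 x y z) (hy : Odd y) (hz : Even z) : z = 0 := by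
  by_contra hz₀
  obtain ⟨k, m, rfl, hm⟩ := exists_eq_two_pow_mul_odd hz₀
  obtain ⟨n, rfl⟩ : ∃ n, k = n + 1 := by
    refine Nat.exists_eq_succ_of_ne_zero fun hk ↦ Int.not_even_iff_odd.2 hm ?_
    simpa [hk] using hz
  have hq := (h.intCast OL).onQuartic
  push_cast at hq
  rw [two_pow_eq, mul_assoc] at hq
  have hmodp : modτ (ω * x + ρ * y) = modτ x + modτ ρ := by
    simp [modτ_ω, modτ_intCast_of_odd hy]
  have hmodq : modτ (ω ^ (n + 1) * m) = 1 := by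
    simp [modτ_ω, modτ_intCast_of_odd hm]
  have hx : modτ x = 0 ∨ modτ x = 1 :=
    (Int.even_or_odd x).imp modτ_intCast_of_even modτ_intCast_of_odd
  have hne : modτ x + modτ ρ ≠ 0 ∧ modτ x + modτ ρ ≠ 1 := by
    rcases hx with hx | hx <;> rw [hx] <;> decide
  have hmod := modτ_eq_of_onQuartic hq (by rw [← modτ_ne_zero_iff, hmodp]; exact hne.1)
    (by rw [← modτ_ne_zero_iff, hmodq]; exact one_ne_zero)
  exact hne.2 (hmodp ▸ hmodq ▸ hmod)

theorem four_dvd (h : OnC6 x y z) (hy : Odd y) (hz : Odd z) : 4 ∣ x := by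
  have hmod : ∀ a b c : ZMod 8, 4 * b = 4 → 4 * c = 4 → OnC6 a b c → 2 * a = 0 := by decide
  have hzero : ((2 * x : ℤ) : ZMod 8) = 0 := by
    push_cast
    exact hmod _ _ _ (zmod_half_mul_of_odd 4 hy) (zmod_half_mul_of_odd 4 hz) (h.intCast _)
  have := (ZMod.intCast_zmod_eq_zero_iff_dvd _ 8).1 hzero
  lia

theorem two_pow_dvd_sub_or_add {n : ℕ} (h : OnC6 (2 ^ (n + 2) * x) y z) (hy : Odd y)
    (hz : Odd z) : 2 ^ (n + 3) ∣ y - z ∨ 2 ^ (n + 3) ∣ y + z := by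
  obtain ⟨i, hi⟩ := hy.sub_odd hz
  obtain ⟨j, hj⟩ := hy.add_odd hz
  rw [← two_mul] at hi hj
  rw [OnC6] at h
  set X := 2 ^ (n + 2) * x with hX
  have hdvd : 2 ^ (n + 2) ∣ 9 * z ^ 2 * (i * j) := by
    obtain ⟨I, hI⟩ : 4 ∣ X ^ 3 + 2 * X ^ 2 * y + 3 * X * y ^ 2 + 2 * y ^ 3 + 18 * y * z ^ 2 := by
      obtain ⟨b, rfl⟩ := hy
      obtain ⟨c, rfl⟩ := hz
      have hX4 : X = 4 * (2 ^ n * x) := by rw [hX]; ring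
      rw [hX4]
      refine ⟨16 * (2 ^ n * x) ^ 3 + 8 * (2 ^ n * x) ^ 2 * (2 * b + 1)
        + 3 * (2 ^ n * x) * (2 * b + 1) ^ 2
        + (2 * b + 1) * (2 * b ^ 2 + 2 * b + 18 * c ^ 2 + 18 * c + 5), by ring⟩
    refine ⟨-x * I, mul_left_cancel₀ four_ne_zero ?_⟩
    linear_combination h - X * hI - 9 * z ^ 2 * (y + z) * hi - 18 * z ^ 2 * i * hj
  have hz2 : ¬ 2 ∣ z := by rwa [← even_iff_two_dvd, Int.not_even_iff_odd]
  have hij : 2 ^ (n + 2) ∣ i * j := by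
    refine Int.prime_two.pow_dvd_of_dvd_mul_left _ (fun hdvd₂ ↦ hz2 ?_) hdvd
    exact Int.prime_two.dvd_of_dvd_pow ((Int.prime_two.dvd_or_dvd hdvd₂).resolve_left (by decide))
  have hsub : ¬ 2 ∣ j - i := by
    rwa [show j - i = z by lia]
  rw [hi, hj, pow_succ']
  exact (pow_dvd_or_pow_dvd_of_not_dvd_sub Int.prime_two hsub hij).imp (mul_dvd_mul_left 2)
    (mul_dvd_mul_left 2)

theorem eq_zero_of_odd (h : OnC6 x y z) (hy : Odd y) (hz : Odd z) : x = 0 := by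
  by_contra hx
  obtain ⟨k, m, rfl, hm⟩ := exists_eq_two_pow_mul_odd hx
  obtain ⟨n, rfl⟩ : ∃ n, k = n + 2 := by
    have := h.four_dvd hy hz
    obtain ⟨c, rfl⟩ := hm
    rcases k with _ | _ | n
    · lia
    · lia
    · exact ⟨n, rfl⟩
  wlog hyz : 2 ^ (n + 3) ∣ y - z generalizing z
  · refine this hz.neg h.neg_right ?_
    rw [sub_neg_eq_add]
    exact (h.two_pow_dvd_sub_or_add hy hz).resolve_left hyz
  obtain ⟨j, hj⟩ := hyz
  have hmodz := modτ_intCast_of_odd hz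
  have hmodl : modτ (ω ^ (n + 2) * (ω * m + 2 * ρ * j)) = 1 := by
    simp [modτ_ω, modτ_intCast_of_odd hm, modτ_two]
  refine not_onQuartic_of_eq_ρ_mul_add (n := n) (l := ω ^ (n + 2) * (ω * m + 2 * ρ * j)) ?_ ?_ ?_ ?_
    (h.intCast OL).onQuartic
  · rw [eq_add_of_sub_eq hj]
    push_cast
    linear_combination (ω * m + 2 * ρ * j) * two_pow_eq (n + 2)
  · rw [← modτ_ne_zero_iff, hmodz]; exact one_ne_zero
  · rw [← modτ_ne_zero_iff, hmodl]; exact one_ne_zero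
  · rw [← modτ_ne_zero_iff, map_sub, hmodl, map_mul, hmodz]; decide

end OnC6

section Isogeny

variable {x y z : ℤ}

theorem modτPowFour_isogeny_eq (hx : Odd x) (hy : Even y) (hz : Odd z) (hxz : 4 ∣ x - z)
    (hdvd : 16 ∣ x ^ 2 - 2 * x * y + 3 * z ^ 2) :
    ∃ l₀ ∈ ({1, 1 + ρ} : Finset OL), modτPowFour ((ω * x + ρ * y) ^ 2 + e₁ * ω ^ 2 * z ^ 2) =
      modτPowFour (τ * (ρ * ((ω * x + ρ * y) * z) + τ ^ 2 * l₀)) := by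
  let F := modτPowFour
  let A := algebraMap (ZMod 16) (ResidueRing 16 11)
  have hmod : ∀ a : ZMod 16, 8 * a = 8 → ∀ c : ZMod 16, 8 * c = 8 → 4 * (a - c) = 0 →
      ∀ b : ZMod 16, 8 * b = 0 → a ^ 2 - 2 * a * b + 3 * c ^ 2 = 0 →
      ∃ l₀ ∈ ({1, 1 + ρ} : Finset OL),
        (F ω * A a + F ρ * A b) ^ 2 + F e₁ * F ω ^ 2 * A c ^ 2 =
          F τ * (F ρ * ((F ω * A a + F ρ * A b) * A c) + F τ ^ 2 * F l₀) := by
    decide +kernel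
  have hxz₁₆ : (4 * (x - z) : ZMod 16) = 0 := by
    exact_mod_cast (ZMod.intCast_zmod_eq_zero_iff_dvd (4 * (x - z)) 16).2 (by lia)
  have hdvd₁₆ : (x ^ 2 - 2 * x * y + 3 * z ^ 2 : ZMod 16) = 0 := by
    exact_mod_cast (ZMod.intCast_zmod_eq_zero_iff_dvd _ 16).2 hdvd
  simpa only [map_add, map_mul, map_pow, map_intCast, F, A] using
    hmod x (zmod_half_mul_of_odd 8 hx) z (zmod_half_mul_of_odd 8 hz) hxz₁₆
      y (zmod_half_mul_of_even 8 hy) hdvd₁₆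

theorem exists_isogeny_eq (hx : Odd x) (hy : Even y) (hz : Odd z) (hxz : 4 ∣ x - z)
    (hdvd : 16 ∣ x ^ 2 - 2 * x * y + 3 * z ^ 2) :
    ∃ l, modτ l ≠ 0 ∧ modτ l ≠ modτ ρ ∧ (ω * x + ρ * y) ^ 2 + e₁ * ω ^ 2 * z ^ 2 =
      τ * (ρ * ((ω * x + ρ * y) * z) + τ ^ 2 * l) := by
  obtain ⟨l₀, hl₀, hmod⟩ := modτPowFour_isogeny_eq hx hy hz hxz hdvd
  rw [← sub_eq_zero, ← map_sub, modτPowFour_eq_zero_iff] at hmod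
  obtain ⟨k, hk⟩ := hmod
  have hmodl : modτ (l₀ + τ * k) = modτ l₀ := by simp [modτ_τ]
  refine ⟨l₀ + τ * k, ?_, ?_, by linear_combination hk⟩
  all_goals
    rw [hmodl]
    clear hk hmodl
    decide +revert

end Isogeny

namespace OnC6

variable {x y z : ℤ}

theorem sixteen_dvd (h : OnC6 x y z) (hx : Odd x) (hy : Even y) (hz : Odd z) :
    16 ∣ x ^ 2 - 2 * x * y + 3 * z ^ 2 := by
  have hmod : ∀ a : ZMod 32, 16 * a = 16 → ∀ b : ZMod 32, 16 * b = 0 →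
      ∀ c : ZMod 32, 16 * c = 16 → OnC6 a b c → 2 * (a ^ 2 - 2 * a * b + 3 * c ^ 2) = 0 := by
    decide +kernel
  have hzero : ((2 * (x ^ 2 - 2 * x * y + 3 * z ^ 2) : ℤ) : ZMod 32) = 0 := by
    push_cast
    exact hmod _ (zmod_half_mul_of_odd 16 hx) _ (zmod_half_mul_of_even 16 hy) _
      (zmod_half_mul_of_odd 16 hz) (h.intCast _)
  have := (ZMod.intCast_zmod_eq_zero_iff_dvd _ 32).1 hzero
  lia

theorem not_odd_even_odd (hx : Odd x) (hy : Even y) (hz : Odd z) : ¬ OnC6 x y z := by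
  intro h
  wlog hxz : 4 ∣ x - z generalizing z
  · refine this hz.neg h.neg_right ?_
    obtain ⟨a, rfl⟩ := hx
    obtain ⟨c, rfl⟩ := hz
    lia
  obtain ⟨l, hl, hlρ, heq⟩ := exists_isogeny_eq hx hy hz hxz (h.sixteen_dvd hx hy hz)
  have hmodpq : modτ ((ω * x + ρ * y) * z) = 1 := by
    simp [modτ_ω, modτ_intCast_of_odd hx, modτ_intCast_of_even hy, modτ_intCast_of_odd hz]
  have hiso := (h.intCast OL).onQuartic.of_isogeny ω_add_τ ω_mul_τ (by rw [e₂])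
  rw [heq] at hiso
  refine not_onQuartic_of_eq_ρ_mul_add (n := 0) rfl ?_ (modτ_ne_zero_iff.1 hl) ?_
    (hiso.of_mul prime_τ.ne_zero)
  · rw [← modτ_ne_zero_iff, hmodpq]; exact one_ne_zero
  · rwa [← modτ_ne_zero_iff, map_sub, map_mul, hmodpq, mul_one, sub_ne_zero]

theorem eq_zero_or_eq_neg (h : OnC6 x y 0) : x = 0 ∨ x = -y := by
  have hfactor : x * ((x + y) * (x ^ 2 + x * y + 2 * y ^ 2)) = 0 := by
    rw [OnC6] at h
    linear_combination h
  rcases mul_eq_zero.1 hfactor with hx | hfactor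
  · exact .inl hx
  rcases mul_eq_zero.1 hfactor with hxy | hquad
  · exact .inr (eq_neg_of_add_eq_zero_left hxy)
  · left
    nlinarith [sq_nonneg y, sq_nonneg (x + 2 * y), sq_nonneg x]

theorem eq_or_eq_neg (h : OnC6 0 y z) (hz : z ≠ 0) : y = z ∨ y = -z := by
  rw [← sq_eq_sq_iff_eq_or_eq_neg]
  refine mul_left_cancel₀ (mul_ne_zero (by decide : (9 : ℤ) ≠ 0) (pow_ne_zero 2 hz)) ?_
  rw [OnC6] at h
  linear_combination h

theorem eq_zero_or_eq_zero (h : OnC6 x y z) (hxyz : ¬ (Even x ∧ Even y ∧ Even z)) :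
    z = 0 ∨ x = 0 := by
  rcases Int.even_or_odd y with hy | hy <;> rcases Int.even_or_odd z with hz | hz
  · exact absurd ⟨(h.even_iff_even hy).2 hz, hy, hz⟩ hxyz
  · have hx : Odd x := by
      rwa [← Int.not_even_iff_odd, h.even_iff_even hy, Int.not_even_iff_odd]
    exact absurd h (not_odd_even_odd hx hy hz)
  · exact .inl (h.eq_zero_of_even hy hz)
  · exact .inr (h.eq_zero_of_odd hy hz)

theorem exists_eq (h : OnC6 x y z) (hxyz : ¬ (Even x ∧ Even y ∧ Even z)) :
    ∃ d, (x, y, z) = (0, d, 0) ∨ (x, y, z) = (d, -d, 0) ∨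
      (x, y, z) = (0, d, d) ∨ (x, y, z) = (0, d, -d) := by
  by_cases hz : z = 0
  · subst hz
    rcases h.eq_zero_or_eq_neg with rfl | rfl
    · exact ⟨y, by simp⟩
    · exact ⟨-y, by simp⟩
  · obtain rfl := (h.eq_zero_or_eq_zero hxyz).resolve_left hz
    rcases h.eq_or_eq_neg hz with rfl | rfl
    · exact ⟨y, by simp⟩
    · exact ⟨-z, by simp⟩

end OnC6

end CurveC6

/-- The only rational points on `C₆ : x⁴ + 2x³y + 3x²y² + 2xy³ + 18xyz² + 9y²z² - 9z⁴ = 0`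
are `(0:1:0)`, `(1:-1:0)`, `(0:1:1)`, `(0:1:-1)`. -/
theorem rational_points_C6 (x y z : ℤ)
    (hcop : Int.gcd x (Int.gcd y z : ℤ) = 1) (hnz : ¬ (x = 0 ∧ y = 0 ∧ z = 0))
    (h : x ^ 4 + 2 * x ^ 3 * y + 3 * x ^ 2 * y ^ 2 + 2 * x * y ^ 3
        + 18 * x * y * z ^ 2 + 9 * y ^ 2 * z ^ 2 - 9 * z ^ 4 = 0) :
    (x, y, z) = (0, 1, 0) ∨ (x, y, z) = (0, -1, 0) ∨
    (x, y, z) = (1, -1, 0) ∨ (x, y, z) = (-1, 1, 0) ∨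
    (x, y, z) = (0, 1, 1) ∨ (x, y, z) = (0, -1, -1) ∨
    (x, y, z) = (0, 1, -1) ∨ (x, y, z) = (0, -1, 1) := by
  have hunit : ∀ d : ℤ, d ∣ x → d ∣ y → d ∣ z → d = 1 ∨ d = -1 := fun d hx hy hz ↦ by
    have hdvd := Int.dvd_coe_gcd hx (Int.dvd_coe_gcd hy hz)
    rw [hcop] at hdvd
    exact Int.isUnit_iff.1 (isUnit_of_dvd_one hdvd)
  have hxyz : ¬ (Even x ∧ Even y ∧ Even z) := fun ⟨hx, hy, hz⟩ ↦
    absurd (hunit 2 hx.two_dvd hy.two_dvd hz.two_dvd) (by decide)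
  obtain ⟨d, hd⟩ := CurveC6.OnC6.exists_eq h hxyz
  simp only [Prod.mk.injEq] at hd ⊢
  rcases hd with ⟨hx, hy, hz⟩ | ⟨hx, hy, hz⟩ | ⟨hx, hy, hz⟩ | ⟨hx, hy, hz⟩
  all_goals
    rcases hunit d (by simp [hx]) (by simp [hy]) (by simp [hz]) with rfl | rfl <;> simp [*]
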